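/- arXiv:0905.0755 — 4 statements merged into one kernel-verified Lean document; each statement's English description precedes it below -/
import Mathlib

section
/- There exists an infinite sequence U₁, U₂, … of closed β-normal λ-terms which has no generator: no closed λ-term A satisfies (A I) ≃β U₁ and (A <U₁,…,Uₙ>) ≃β U_{n+1} for all n ≥ 1. -/
/-- Untyped λ-terms in de Bruijn notation. -/
inductive Lam : Type
  | var : ℕ → Lam
  | app : Lam → Lam → Lam
  | lam : Lam → Lam
  deriving DecidableEq

namespace Lam

/-- Shift by one the free variables with index ≥ `d`. -/
def lift (d : ℕ) : Lam → Lam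
  | var n => if n < d then var n else var (n + 1)
  | app M N => app (lift d M) (lift d N)
  | lam M => lam (lift (d + 1) M)

/-- Capture-avoiding substitution of `N` for the free variable of index `n`. -/
def subst : Lam → ℕ → Lam → Lam
  | var m, n, N => if m = n then N else if n < m then var (m - 1) else var m
  | app M₁ M₂, n, N => app (subst M₁ n N) (subst M₂ n N)
  | lam M, n, N => lam (subst M (n + 1) (lift 0 N))

/-- One-step β-reduction (contraction of a β-redex anywhere in the term). -/
inductive Step : Lam → Lam → Prop
  | beta (M N : Lam) : Step (app (lam M) N) (subst M 0 N)
  | appL {M M' : Lam} (N : Lam) : Step M M' → Step (app M N) (app M' N)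
  | appR (M : Lam) {N N' : Lam} : Step N N' → Step (app M N) (app M N')
  | lam {M M' : Lam} : Step M M' → Step (Lam.lam M) (Lam.lam M')

/-- β-equivalence: the equivalence relation generated by one-step β-reduction. -/
def BetaEq : Lam → Lam → Prop := Relation.EqvGen Step

/-- The variable of index `n` occurs free in the term. -/
def HasFree : Lam → ℕ → Prop
  | var m, n => m = n
  | app M N, n => HasFree M n ∨ HasFree N n
  | lam M, n => HasFree M (n + 1)

/-- A term is closed if it has no free variables. -/
def Closed (M : Lam) : Prop := ∀ n, ¬ HasFree M n

/-- A term is β-normal: it contains no β-redex. -/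
def IsBetaNormal : Lam → Prop
  | app (lam _) _ => False
  | app M N => IsBetaNormal M ∧ IsBetaNormal N
  | lam M => IsBetaNormal M
  | var _ => True

/-- A term is βη-normal: it contains no β-redex and no η-redex
`λx.(M x)` with `x` not free in `M`. -/
def IsBetaEtaNormal : Lam → Prop
  | app (lam _) _ => False
  | app M N => IsBetaEtaNormal M ∧ IsBetaEtaNormal N
  | lam (app M (var 0)) => HasFree M 0 ∧ IsBetaEtaNormal (app M (var 0))
  | lam M => IsBetaEtaNormal M
  | var _ => True

/-- `I = λx.x`. -/
def I : Lam := lam (var 0)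

/-- `T = λxλy.x`. -/
def T : Lam := lam (lam (var 1))

/-- `F = λxλy.y`. -/
def F : Lam := lam (lam (var 0))

/-- The pair `<M,N> = λx.(x M N)` (the binder shifts the free variables of `M,N`). -/
def pair (M N : Lam) : Lam := lam (app (app (var 0) (lift 0 M)) (lift 0 N))

end Lam

/-- For a sequence `U` (where `U i` codes the mathematical `U_{i+1}`),
`tuple U n` is the term `<U₁,…,Uₙ> = <…<<I,U₁>,U₂>,…,Uₙ>` (and `tuple U 0 = I`). -/
def Lam.tuple (U : ℕ → Lam) : ℕ → Lam
  | 0 => Lam.I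
  | n + 1 => Lam.pair (Lam.tuple U n) (U n)

namespace Graph

/-- Points of a graph model: atoms and finite step functions. -/
inductive D : Type
  | atom : D
  | arr : List D → D → D

/-- Insert the value `X` at position `n` of the environment. -/
def ins (ρ : ℕ → Set D) (n : ℕ) (X : Set D) : ℕ → Set D := fun i =>
  if i < n then ρ i else if i = n then X else ρ (i - 1)

/-- Interpretation of terms in the graph model. -/
def sem : Lam → (ℕ → Set D) → Set D
  | .var n, ρ => ρ n
  | .app M N, ρ => {b | ∃ l : List D, (∀ a ∈ l, a ∈ sem N ρ) ∧ D.arr l b ∈ sem M ρ}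
  | .lam M, ρ => {c | ∃ l b, c = D.arr l b ∧ b ∈ sem M (ins ρ 0 {a | a ∈ l})}

theorem ins_ins (ρ : ℕ → Set D) (n : ℕ) (X Y : Set D) :
    ins (ins ρ n X) 0 Y = ins (ins ρ 0 Y) (n + 1) X := by
  funext i
  rcases i with _ | _ | i
  · simp [ins]
  · rcases n with _ | n <;> simp [ins]
  · simp [ins]

theorem sem_lift (M : Lam) : ∀ d (ρ : ℕ → Set D) X,
    sem (M.lift d) (ins ρ d X) = sem M ρ := by
  induction M with
  | var n =>
    intro d ρ X
    simp only [Lam.lift]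
    split_ifs with h
    · simp [sem, ins, h]
    · have h1 : ¬ n + 1 < d := by omega
      have h2 : n + 1 ≠ d := by omega
      simp [sem, ins, h1, h2]
  | app M N ihM ihN => intro d ρ X; simp [Lam.lift, sem, ihM, ihN]
  | lam M ih => intro d ρ X; simp [Lam.lift, sem, ins_ins, ih]

theorem sem_subst (M : Lam) : ∀ n N (ρ : ℕ → Set D),
    sem (M.subst n N) ρ = sem M (ins ρ n (sem N ρ)) := by
  induction M with
  | var m =>
    intro n N ρ
    simp only [Lam.subst]
    split_ifs with h h2
    · simp [sem, ins, h]
    · have h1 : ¬ m < n := by omega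
      simp [sem, ins, h1, h]
    · have h1 : m < n := by omega
      simp [sem, ins, h1]
  | app M N ihM ihN => intro d ρ X; simp [Lam.subst, sem, ihM, ihN]
  | lam M ih => intro n N ρ; simp [Lam.subst, sem, ins_ins, ih, sem_lift]

theorem ins_mono {ρ σ : ℕ → Set D} (h : ∀ i, ρ i ⊆ σ i) (n : ℕ) {X Y : Set D} (hX : X ⊆ Y) :
    ∀ i, ins ρ n X i ⊆ ins σ n Y i := by
  intro i
  simp only [ins]
  split_ifs
  · exact h _
  · exact hX
  · exact h _

theorem sem_mono (M : Lam) : ∀ (ρ σ : ℕ → Set D), (∀ i, ρ i ⊆ σ i) → sem M ρ ⊆ sem M σ := by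
  induction M with
  | var n => intro ρ σ h; exact h n
  | app M N ihM ihN =>
    rintro ρ σ h b ⟨l, h1, h2⟩
    exact ⟨l, fun a ha => ihN _ _ h (h1 a ha), ihM _ _ h h2⟩
  | lam M ih =>
    rintro ρ σ h c ⟨l, b, h1, h2⟩
    exact ⟨l, b, h1, ih _ _ (ins_mono h 0 subset_rfl) h2⟩

theorem sem_ins_mono (M : Lam) (ρ : ℕ → Set D) (k : ℕ) {X Y : Set D} (h : X ⊆ Y) :
    sem M (ins ρ k X) ⊆ sem M (ins ρ k Y) :=
  sem_mono M _ _ (ins_mono (fun _ => subset_rfl) k h)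

theorem sem_cont (M : Lam) : ∀ (ρ : ℕ → Set D) (k : ℕ) (X : Set D), ∀ b ∈ sem M (ins ρ k X),
    ∃ l : List D, (∀ a ∈ l, a ∈ X) ∧ b ∈ sem M (ins ρ k {a | a ∈ l}) := by
  induction M with
  | var n =>
    intro ρ k X b hb
    by_cases h : n = k
    · subst h
      refine ⟨[b], ?_, ?_⟩
      · simpa [sem, ins] using hb
      · simp [sem, ins]
    · refine ⟨[], by simp, ?_⟩
      simpa [sem, ins, h] using hb
  | app M N ihM ihN =>
    rintro ρ k X b ⟨l, h1, h2⟩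
    obtain ⟨m, hm, hm'⟩ := ihM _ _ _ _ h2
    have key : ∃ m' : List D, (∀ a ∈ m', a ∈ X) ∧
        ∀ a ∈ l, a ∈ sem N (ins ρ k {a | a ∈ m'}) := by
      clear h2 hm'
      induction l with
      | nil => exact ⟨[], by simp, by simp⟩
      | cons c l ih =>
        obtain ⟨p, hp, hp'⟩ := ih (fun a ha => h1 a (List.mem_cons_of_mem _ ha))
        obtain ⟨q, hq, hq'⟩ := ihN _ _ _ _ (h1 c List.mem_cons_self)
        refine ⟨p ++ q, ?_, ?_⟩
        · intro a ha
          rcases List.mem_append.1 ha with ha | ha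
          · exact hp a ha
          · exact hq a ha
        · intro a ha
          rcases List.mem_cons.1 ha with rfl | ha
          · exact sem_ins_mono N ρ k (fun x hx => List.mem_append.2 (Or.inr hx)) hq'
          · exact sem_ins_mono N ρ k (fun x hx => List.mem_append.2 (Or.inl hx)) (hp' a ha)
    obtain ⟨p, hp, hp'⟩ := key
    refine ⟨m ++ p, ?_, l, ?_, ?_⟩
    · intro a ha
      rcases List.mem_append.1 ha with ha | ha
      · exact hm a ha
      · exact hp a ha
    · intro a ha
      exact sem_ins_mono N ρ k (fun x hx => List.mem_append.2 (Or.inr hx)) (hp' a ha)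
    · exact sem_ins_mono M ρ k (fun x hx => List.mem_append.2 (Or.inl hx)) hm'
  | lam M ih =>
    rintro ρ k X c ⟨l, b, h1, h2⟩
    rw [ins_ins] at h2
    obtain ⟨m, hm, hm'⟩ := ih _ _ _ _ h2
    refine ⟨m, hm, l, b, h1, ?_⟩
    rw [ins_ins]
    exact hm'

theorem sem_step {M N : Lam} (h : Lam.Step M N) : ∀ ρ, sem M ρ = sem N ρ := by
  induction h with
  | beta M N =>
    intro ρ
    rw [sem_subst]
    ext b
    constructor
    · rintro ⟨l, h1, l', b', h2, h3⟩
      cases h2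
      exact sem_ins_mono M ρ 0 h1 h3
    · intro hb
      obtain ⟨l, h1, h2⟩ := sem_cont _ _ _ _ _ hb
      exact ⟨l, h1, l, b, rfl, h2⟩
  | appL N _ ih => intro ρ; simp [sem, ih]
  | appR M _ ih => intro ρ; simp [sem, ih]
  | lam _ ih => intro ρ; simp [sem, ih]

theorem sem_eq {M N : Lam} (h : Lam.BetaEq M N) : ∀ ρ, sem M ρ = sem N ρ := by
  induction h with
  | rel _ _ h => exact sem_step h
  | refl => intro ρ; rfl
  | symm _ _ _ ih => intro ρ; exact (ih ρ).symm
  | trans _ _ _ _ _ ih1 ih2 => intro ρ; exact (ih1 ρ).trans (ih2 ρ)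

theorem consistent : ¬ Lam.BetaEq Lam.T Lam.F := by
  intro h
  have h := sem_eq h (fun _ => ∅)
  have h1 : D.arr [D.atom] (D.arr [] D.atom) ∈ sem Lam.T (fun _ => ∅) :=
    ⟨_, _, rfl, _, _, rfl, by simp [sem, ins]⟩
  rw [h] at h1
  obtain ⟨l, b, h2, l', b', h3, h4⟩ := h1
  cases h2
  cases h3
  simp [sem, ins] at h4

/-- Goedel numbering of terms. -/
def code : Lam → ℕ
  | .var n => Nat.pair 0 n
  | .app M N => Nat.pair 1 (Nat.pair (code M) (code N))
  | .lam M => Nat.pair 2 (code M)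

theorem code_inj : Function.Injective code := by
  intro M
  induction M with
  | var n => intro N h; cases N <;> simp_all [code, Nat.pair_eq_pair]
  | app M M' ih ih' =>
    intro N h
    cases N <;> simp only [code, Nat.pair_eq_pair] at h
    · omega
    · rw [ih h.2.1, ih' h.2.2]
    · omega
  | lam M ih =>
    intro N h
    cases N <;> simp only [code, Nat.pair_eq_pair] at h
    · omega
    · omega
    · rw [ih h.2]

open Classical in
/-- A closed normal term different from `A V`. -/
noncomputable def pick (A V : Lam) : Lam :=
  if Lam.BetaEq (Lam.app A V) Lam.T then Lam.F else Lam.T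

theorem pick_ne (A V : Lam) : ¬ Lam.BetaEq (Lam.app A V) (pick A V) := by
  unfold pick
  split_ifs with h
  · intro h'
    exact consistent (.trans _ _ _ (.symm _ _ h) h')
  · exact h

theorem pick_ok (A V : Lam) : Lam.Closed (pick A V) ∧ Lam.IsBetaNormal (pick A V) := by
  unfold pick
  split_ifs with h
  · exact ⟨fun n h => by simp [Lam.F, Lam.HasFree] at h, by simp [Lam.F, Lam.IsBetaNormal]⟩
  · exact ⟨fun n h => by simp [Lam.T, Lam.HasFree] at h, by simp [Lam.T, Lam.IsBetaNormal]⟩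

/-- The diagonal tuples. -/
noncomputable def tup (e : ℕ → Lam) : ℕ → Lam
  | 0 => Lam.I
  | n + 1 => Lam.pair (tup e n) (pick (e n) (tup e n))

theorem tuple_eq (e : ℕ → Lam) (n : ℕ) :
    Lam.tuple (fun n => pick (e n) (tup e n)) n = tup e n := by
  induction n with
  | zero => rfl
  | succ n ih => simp only [Lam.tuple, tup, ih]

end Graph

/-- There is an infinite sequence `U₁, U₂, …` of closed β-normal λ-terms without
generator : no closed λ-term `A` satisfies `(A I) ≃β U₁` and
`(A <U₁,…,Uₙ>) ≃β U_{n+1}` for all `n ≥ 1`.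
(Here `U i` codes the mathematical `U_{i+1}`, so `Lam.tuple U n = <U₁,…,Uₙ>`.) -/
theorem statement8 :
    ∃ U : ℕ → Lam,
      (∀ i, Lam.Closed (U i) ∧ Lam.IsBetaNormal (U i)) ∧
      ¬ ∃ A, Lam.Closed A ∧ Lam.BetaEq (Lam.app A Lam.I) (U 0) ∧
          ∀ n, 1 ≤ n → Lam.BetaEq (Lam.app A (Lam.tuple U n)) (U n) := by
  haveI : Countable Lam := Graph.code_inj.countable
  haveI : Nonempty Lam := ⟨Lam.I⟩
  obtain ⟨e, he⟩ := exists_surjective_nat Lam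
  refine ⟨fun n => Graph.pick (e n) (Graph.tup e n), fun i => Graph.pick_ok _ _, ?_⟩
  rintro ⟨A, -, h0, h⟩
  obtain ⟨n, rfl⟩ := he A
  rcases Nat.eq_zero_or_pos n with hn | hn
  · subst hn
    exact Graph.pick_ne _ _ h0
  · have h1 := h n hn
    rw [Graph.tuple_eq] at h1
    exact Graph.pick_ne _ _ h1
end

section
/- There exists a numeral system which possesses a closed λ-term for Predecessor and a closed λ-term for Zero Test, but which possesses no closed λ-term for Successor. -/
namespace Lam

/-! ### A graph model, used for consistency -/

def cons (X : Set ℕ) (ρ : ℕ → Set ℕ) : ℕ → Set ℕ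
  | 0 => X
  | n + 1 => ρ n

def enc (a : Finset ℕ) (b : ℕ) : ℕ := Encodable.encode (a, b)

theorem enc_inj {a a' : Finset ℕ} {b b' : ℕ} (h : enc a b = enc a' b') : a = a' ∧ b = b' := by
  have := Encodable.encode_injective h
  simpa using this

def interp : Lam → (ℕ → Set ℕ) → Set ℕ
  | var n, ρ => ρ n
  | app M N, ρ => {b | ∃ a : Finset ℕ, (a : Set ℕ) ⊆ interp N ρ ∧ enc a b ∈ interp M ρ}
  | lam M, ρ => {m | ∃ (a : Finset ℕ) (b : ℕ), m = enc a b ∧ b ∈ interp M (cons a ρ)}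

theorem mem_lam {M : Lam} {ρ : ℕ → Set ℕ} {a : Finset ℕ} {b : ℕ} :
    enc a b ∈ interp (lam M) ρ ↔ b ∈ interp M (cons a ρ) := by
  constructor
  · rintro ⟨a', b', h, hb⟩
    obtain ⟨rfl, rfl⟩ := enc_inj h
    exact hb
  · intro h
    exact ⟨a, b, rfl, h⟩

theorem cons_mono {X Y : Set ℕ} {ρ σ : ℕ → Set ℕ} (h : X ⊆ Y) (h' : ∀ n, ρ n ⊆ σ n) :
    ∀ n, cons X ρ n ⊆ cons Y σ n
  | 0 => h
  | n + 1 => h' n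

theorem interp_mono (M : Lam) : ∀ {ρ σ : ℕ → Set ℕ}, (∀ n, ρ n ⊆ σ n) →
    interp M ρ ⊆ interp M σ := by
  induction M with
  | var n => intro ρ σ h; exact h n
  | app M N ihM ihN =>
    rintro ρ σ h b ⟨a, ha, hb⟩
    exact ⟨a, ha.trans (ihN h), ihM h hb⟩
  | lam M ih =>
    rintro ρ σ h m ⟨a, b, rfl, hb⟩
    exact ⟨a, b, rfl, ih (cons_mono (le_refl _) h) hb⟩

theorem interp_cont (M : Lam) : ∀ {ρ : ℕ → Set ℕ} {b : ℕ}, b ∈ interp M ρ →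
    ∃ σ : ℕ → Finset ℕ, (∀ n, (σ n : Set ℕ) ⊆ ρ n) ∧ b ∈ interp M (fun n => (σ n : Set ℕ)) := by
  induction M with
  | var k =>
    intro ρ b h
    refine ⟨fun n => if n = k then {b} else ∅, fun n => ?_, ?_⟩
    · by_cases hn : n = k
      · subst hn
        simpa [interp] using h
      · simp [hn]
    · simp [interp]
  | app M N ihM ihN =>
    rintro ρ b ⟨a, ha, hb⟩
    obtain ⟨σ, hσ, hσb⟩ := ihM hb
    have : ∀ x : ℕ, ∃ τ : ℕ → Finset ℕ, x ∈ a → (∀ n, (τ n : Set ℕ) ⊆ ρ n) ∧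
        x ∈ interp N (fun n => (τ n : Set ℕ)) := by
      intro x
      by_cases hx : x ∈ a
      · obtain ⟨τ, h⟩ := ihN (ha hx)
        exact ⟨τ, fun _ => h⟩
      · exact ⟨fun _ => ∅, fun h => absurd h hx⟩
    choose τ hτ using this
    refine ⟨fun n => σ n ∪ a.biUnion (fun x => τ x n), fun n => ?_, a, ?_, ?_⟩
    · intro y hy
      simp only [Finset.coe_union, Set.mem_union, Finset.mem_coe, Finset.mem_biUnion] at hy
      rcases hy with hy | ⟨x, hx, hy⟩
      · exact hσ n hy
      · exact (hτ x hx).1 n hy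
    · intro x hx
      refine interp_mono N ?_ (hτ x hx).2
      intro n y hy
      simp only [Finset.coe_union, Set.mem_union, Finset.mem_coe, Finset.mem_biUnion]
      exact Or.inr ⟨x, hx, hy⟩
    · refine interp_mono M ?_ hσb
      intro n y hy
      simp only [Finset.coe_union, Set.mem_union, Finset.mem_coe]
      exact Or.inl hy
  | lam M ih =>
    rintro ρ m ⟨a, b, rfl, hb⟩
    obtain ⟨σ, hσ, hσb⟩ := ih hb
    refine ⟨fun n => σ (n + 1), fun n => hσ (n + 1), a, b, rfl, interp_mono M ?_ hσb⟩
    rintro (_ | n)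
    · exact hσ 0
    · exact le_refl _

theorem interp_lift (M : Lam) : ∀ (d : ℕ) (ρ : ℕ → Set ℕ),
    interp (lift d M) ρ = interp M (fun n => if n < d then ρ n else ρ (n + 1)) := by
  induction M with
  | var k => intro d ρ; simp only [lift, interp]; split_ifs <;> rfl
  | app M N ihM ihN => intro d ρ; simp only [lift, interp, ihM, ihN]
  | lam M ih =>
    intro d ρ
    have key : ∀ X : Set ℕ, (fun n => if n < d + 1 then cons X ρ n else cons X ρ (n + 1)) =
        cons X (fun n => if n < d then ρ n else ρ (n + 1)) := by
      intro X; funext n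
      cases n with
      | zero => simp [cons]
      | succ n => simp [cons]
    simp only [lift, interp, ih, key]

theorem interp_subst (M : Lam) : ∀ (k : ℕ) (N : Lam) (ρ : ℕ → Set ℕ),
    interp (subst M k N) ρ =
      interp M (fun m => if m = k then interp N ρ else if k < m then ρ (m - 1) else ρ m) := by
  induction M with
  | var j => intro k N ρ; simp only [subst, interp]; split_ifs <;> rfl
  | app M M' ihM ihN => intro k N ρ; simp only [subst, interp, ihM, ihN]
  | lam M ih =>
    intro k N ρ
    have key : ∀ X : Set ℕ, (fun m => if m = k + 1 then interp (lift 0 N) (cons X ρ) else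
        if k + 1 < m then cons X ρ (m - 1) else cons X ρ m) =
        cons X (fun m => if m = k then interp N ρ else if k < m then ρ (m - 1) else ρ m) := by
      intro X; funext n
      cases n with
      | zero => simp [cons]
      | succ n =>
        rcases n with _ | n <;> simp [cons, interp_lift, eq_comm]
    simp only [subst, interp, ih, key]

theorem interp_beta (M N : Lam) (ρ : ℕ → Set ℕ) :
    interp (app (lam M) N) ρ = interp (subst M 0 N) ρ := by
  have key : (fun m => if m = 0 then interp N ρ else if 0 < m then ρ (m - 1) else ρ m) =
      cons (interp N ρ) ρ := by
    funext n
    cases n <;> simp [cons]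
  rw [interp_subst, key]
  ext b
  constructor
  · rintro ⟨a, ha, hb⟩
    exact interp_mono M (cons_mono ha (fun _ => le_refl _)) (mem_lam.1 hb)
  · intro hb
    obtain ⟨σ, hσ, hσb⟩ := interp_cont M hb
    refine ⟨σ 0, hσ 0, mem_lam.2 (interp_mono M ?_ hσb)⟩
    rintro (_ | n)
    · exact le_refl _
    · exact hσ (n + 1)

theorem interp_step {M N : Lam} (h : Step M N) : ∀ ρ, interp M ρ = interp N ρ := by
  induction h with
  | beta M N => exact interp_beta M N
  | appL N _ ih => intro ρ; simp only [interp, ih]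
  | appR M _ ih => intro ρ; simp only [interp, ih]
  | lam _ ih => intro ρ; simp only [interp, ih]

theorem interp_betaEq {M N : Lam} (h : BetaEq M N) : ∀ ρ, interp M ρ = interp N ρ := by
  induction h with
  | rel _ _ h => exact interp_step h
  | refl _ => intro ρ; rfl
  | symm _ _ _ ih => intro ρ; exact (ih ρ).symm
  | trans _ _ _ _ _ ih ih' => intro ρ; exact (ih ρ).trans (ih' ρ)

theorem interp_T_ne_F (ρ : ℕ → Set ℕ) : interp T ρ ≠ interp F ρ := by
  intro h
  have h1 : enc {0} (enc ∅ 0) ∈ interp T ρ := by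
    rw [T, mem_lam, mem_lam]; simp [interp, cons]
  rw [h, F, mem_lam, mem_lam] at h1
  simp [interp, cons] at h1

/-! ### Countability of terms -/

def code : Lam → ℕ
  | var n => Nat.pair 0 n
  | app M N => Nat.pair 1 (Nat.pair (code M) (code N))
  | lam M => Nat.pair 2 (code M)

theorem code_inj : ∀ M N : Lam, code M = code N → M = N := by
  intro M
  induction M with
  | var n => intro N h; cases N <;> simp_all [code, Nat.pair_eq_pair]
  | app M M' ih ih' =>
    intro N h
    cases N with
    | app A B =>
      simp only [code, Nat.pair_eq_pair] at h
      rw [ih _ h.2.1, ih' _ h.2.2]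
    | _ => simp [code, Nat.pair_eq_pair] at h
  | lam M ih =>
    intro N h
    cases N with
    | lam A =>
      simp only [code, Nat.pair_eq_pair] at h
      rw [ih _ h.2]
    | _ => simp [code, Nat.pair_eq_pair] at h

/-! ### Closed terms -/

theorem subst_of_fresh (M : Lam) : ∀ (k : ℕ) (N : Lam), (∀ m, k ≤ m → ¬ HasFree M m) →
    subst M k N = M := by
  induction M with
  | var j =>
    intro k N h
    have : j < k := by
      by_contra hc
      exact h j (by omega) rfl
    simp [subst, show j ≠ k by omega, show ¬ k < j by omega]
  | app M M' ih ih' =>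
    intro k N h
    simp only [subst]
    rw [ih k N fun m hm hf => h m hm (Or.inl hf), ih' k N fun m hm hf => h m hm (Or.inr hf)]
  | lam M ih =>
    intro k N h
    simp only [subst]
    rw [ih (k + 1)]
    intro m hm hf
    obtain ⟨m, rfl⟩ : ∃ m', m = m' + 1 := ⟨m - 1, by omega⟩
    exact h m (by omega) hf

theorem subst_closed {M : Lam} (h : Closed M) (k : ℕ) (N : Lam) : subst M k N = M :=
  subst_of_fresh M k N fun m _ => h m

theorem lift_of_fresh (M : Lam) : ∀ (k : ℕ), (∀ m, k ≤ m → ¬ HasFree M m) →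
    lift k M = M := by
  induction M with
  | var j =>
    intro k h
    have : j < k := by
      by_contra hc
      exact h j (by omega) rfl
    simp [lift, this]
  | app M M' ih ih' =>
    intro k h
    simp only [lift]
    rw [ih k fun m hm hf => h m hm (Or.inl hf), ih' k fun m hm hf => h m hm (Or.inr hf)]
  | lam M ih =>
    intro k h
    simp only [lift]
    rw [ih (k + 1)]
    intro m hm hf
    obtain ⟨m, rfl⟩ : ∃ m', m = m' + 1 := ⟨m - 1, by omega⟩
    exact h m (by omega) hf

theorem lift_closed {M : Lam} (h : Closed M) (k : ℕ) : lift k M = M :=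
  lift_of_fresh M k fun m _ => h m

theorem BetaEq.step {M N K : Lam} (h : Step M N) (hNK : BetaEq N K) : BetaEq M K :=
  Relation.EqvGen.trans _ _ _ (Relation.EqvGen.rel _ _ h) hNK

/-! ### The numeral systems -/

def bit (b : Bool) : Lam := if b then T else F

theorem closed_T : Closed T := by intro n; simp [T, HasFree]
theorem closed_F : Closed F := by intro n; simp [F, HasFree]

theorem closed_bit (b : Bool) : Closed (bit b) := by
  cases b
  · exact closed_F
  · exact closed_T

/-- The numeral system attached to a sequence of booleans. -/
def num (a : ℕ → Bool) : ℕ → Lam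
  | 0 => lam T
  | n + 1 => lam (app (app (var 0) (bit (a n))) (num a n))

theorem closed_num (a : ℕ → Bool) (n : ℕ) : Closed (num a n) := by
  induction n with
  | zero => intro m; exact closed_T (m + 1)
  | succ n ih =>
    intro m h
    rcases h with (h | h) | h
    · exact absurd h (by simp [HasFree])
    · exact closed_bit _ _ h
    · exact ih _ h

theorem normal_num (a : ℕ → Bool) (n : ℕ) : IsBetaEtaNormal (num a n) := by
  induction n with
  | zero => simp [num, T, IsBetaEtaNormal]
  | succ n ih =>
    have hb : IsBetaEtaNormal (bit (a n)) := by
      cases a n <;> simp [bit, T, F, IsBetaEtaNormal]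
    have key : ∀ L, IsBetaEtaNormal (lam L) →
        IsBetaEtaNormal (lam (app (app (var 0) (bit (a n))) (lam L))) := by
      intro L hL
      simp only [IsBetaEtaNormal]
      exact ⟨⟨trivial, hb⟩, hL⟩
    cases n with
    | zero => exact key _ ih
    | succ n => exact key _ ih

theorem num_inj (a : ℕ → Bool) : ∀ m n, num a m = num a n → m = n := by
  intro m
  induction m with
  | zero => intro n h; cases n <;> simp_all [num, T]
  | succ m ih =>
    intro n h
    cases n with
    | zero => simp [num, T] at h
    | succ n =>
      simp only [num, lam.injEq, app.injEq] at h
      rw [ih n h.2]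

/-- Applying a nonzero numeral. -/
theorem num_app (a : ℕ → Bool) (n : ℕ) (N : Lam) :
    Step (app (num a (n + 1)) N) (app (app N (bit (a n))) (num a n)) := by
  have := Step.beta (app (app (var 0) (bit (a n))) (num a n)) N
  simpa [num, subst, subst_closed (closed_bit _), subst_closed (closed_num a n)] using this

theorem T_app {A : Lam} (hA : Closed A) (B : Lam) : BetaEq (app (app T A) B) A := by
  have h1 : Step (app T A) (lam A) := by
    have := Step.beta (lam (var 1)) A
    simpa [T, subst, lift_closed hA] using this
  have h2 : Step (app (lam A) B) A := by
    have := Step.beta A B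
    rwa [subst_closed hA] at this
  exact BetaEq.step (Step.appL _ h1) (Relation.EqvGen.rel _ _ h2)

theorem F_app (A B : Lam) : BetaEq (app (app F A) B) B := by
  have h1 : Step (app F A) (lam (var 0)) := by
    have := Step.beta (lam (var 0)) A
    simpa [F, subst] using this
  have h2 : Step (app (lam (var 0)) B) B := by
    have := Step.beta (var 0) B
    simpa [subst] using this
  exact BetaEq.step (Step.appL _ h1) (Relation.EqvGen.rel _ _ h2)

theorem exists_pred (a : ℕ → Bool) :
    ∃ P, Closed P ∧ ∀ n, BetaEq (app P (num a (n + 1))) (num a n) := by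
  refine ⟨lam (app (var 0) F), ?_, fun n => ?_⟩
  · intro n; simp [HasFree, F]
  · have h : Step (app (lam (app (var 0) F)) (num a (n + 1))) (app (num a (n + 1)) F) := by
      have := Step.beta (app (var 0) F) (num a (n + 1))
      simpa [subst, subst_closed closed_F] using this
    exact BetaEq.step h (BetaEq.step (num_app a n F) (F_app _ _))

theorem exists_zero (a : ℕ → Bool) :
    ∃ Z, Closed Z ∧ BetaEq (app Z (num a 0)) T ∧ ∀ n, BetaEq (app Z (num a (n + 1))) F := by
  have hc : Closed (lam (lam F)) := by intro n; simp [HasFree, F]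
  have h : ∀ N, Step (app (lam (app (var 0) (lam (lam F)))) N) (app N (lam (lam F))) := by
    intro N
    have := Step.beta (app (var 0) (lam (lam F))) N
    rw [subst, subst_closed hc] at this
    simpa [subst] using this
  have hK : ∀ {M : Lam}, Closed M → ∀ N, Step (app (lam M) N) M := by
    intro M hM N
    have := Step.beta M N
    rwa [subst_closed hM] at this
  have hc' : Closed (lam F) := by intro n; simp [HasFree, F]
  refine ⟨lam (app (var 0) (lam (lam F))), ?_, ?_, fun n => ?_⟩
  · intro n; simp [HasFree, F]
  · exact BetaEq.step (h _) (Relation.EqvGen.rel _ _ (hK closed_T _))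
  · exact BetaEq.step (h _) (BetaEq.step (num_app a n _)
      (BetaEq.step (Step.appL _ (hK hc' _)) (Relation.EqvGen.rel _ _ (hK closed_F _))))

theorem bit_eq_of_num {a b : ℕ → Bool} {n : ℕ} (h : BetaEq (num a (n + 1)) (num b (n + 1))) :
    a n = b n := by
  have hp : ∀ c : ℕ → Bool, BetaEq (app (num c (n + 1)) T) (bit (c n)) := fun c =>
    BetaEq.step (num_app c n T) (T_app (closed_bit _) _)
  have ρ : ℕ → Set ℕ := fun _ => ∅
  have e : interp (bit (a n)) ρ = interp (bit (b n)) ρ := by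
    rw [← interp_betaEq (hp a), ← interp_betaEq (hp b)]
    simp only [interp_betaEq h, interp]
  cases ha : a n <;> cases hb : b n
  · rfl
  · rw [ha, hb] at e; exact absurd e.symm (interp_T_ne_F ρ)
  · rw [ha, hb] at e; exact absurd e (interp_T_ne_F ρ)
  · rfl

theorem seq_eq {a b : ℕ → Bool} {S : Lam}
    (ha : ∀ n, BetaEq (app S (num a n)) (num a (n + 1)))
    (hb : ∀ n, BetaEq (app S (num b n)) (num b (n + 1))) : a = b := by
  have step : ∀ n, num a n = num b n → a n = b n := by
    intro n h
    apply bit_eq_of_num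
    refine Relation.EqvGen.trans _ _ _ (Relation.EqvGen.symm _ _ (ha n)) ?_
    rw [h]
    exact hb n
  have all : ∀ n, num a n = num b n := by
    intro n
    induction n with
    | zero => rfl
    | succ n ih => simp only [num, step n ih, ih]
  funext n
  exact step n (all n)

theorem exists_no_succ : ∃ a : ℕ → Bool,
    ¬ ∃ S, Closed S ∧ ∀ n, BetaEq (app S (num a n)) (num a (n + 1)) := by
  by_contra hc
  push Not at hc
  choose S _ hS using hc
  have hinj : Function.Injective (fun a => code (S a)) := by
    intro a b h
    have h' : S a = S b := code_inj _ _ h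
    exact seq_eq (hS a) (h' ▸ hS b)
  have hcnt : Countable (ℕ → Bool) := hinj.countable
  have : Function.Injective (fun s : Set ℕ => (fun n => by classical exact decide (n ∈ s) : ℕ → Bool)) := by
    intro s t h
    ext n
    have := congrFun h n
    simpa using this
  have hcnt' : Countable (Set ℕ) := this.countable
  obtain ⟨f, hf⟩ := exists_injective_nat (Set ℕ)
  exact Function.cantor_injective f hf

end Lam

/-- There exists a numeral system (an infinite sequence of pairwise distinct closed
βη-normal λ-terms) which possesses a closed λ-term for Predecessor and a closed λ-term
for Zero Test, but no closed λ-term for Successor. -/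
theorem statement10 :
    ∃ d : ℕ → Lam,
      (∀ n, Lam.Closed (d n)) ∧ (∀ n, Lam.IsBetaEtaNormal (d n)) ∧
      Function.Injective d ∧
      (∃ P, Lam.Closed P ∧ ∀ n, Lam.BetaEq (Lam.app P (d (n + 1))) (d n)) ∧
      (∃ Z, Lam.Closed Z ∧ Lam.BetaEq (Lam.app Z (d 0)) Lam.T ∧
          ∀ n, Lam.BetaEq (Lam.app Z (d (n + 1))) Lam.F) ∧
      ¬ ∃ S, Lam.Closed S ∧ ∀ n, Lam.BetaEq (Lam.app S (d n)) (d (n + 1)) := by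
  obtain ⟨a, ha⟩ := Lam.exists_no_succ
  exact ⟨Lam.num a, Lam.closed_num a, Lam.normal_num a, fun m n h => Lam.num_inj a m n h,
    Lam.exists_pred a, Lam.exists_zero a, ha⟩
end

section
/- (Barendregt) A numeral system d is adequate — i.e. it possesses closed λ-terms for Successor, Predecessor, and Zero Test — if and only if every total recursive (computable) function φ : ℕ^p → ℕ (for every arity p ≥ 1) is λ-definable with respect to d. -/
/-- Iterated application `F M₁ … Mₚ`. -/
def Lam.applyAll : Lam → List Lam → Lam
  | G, [] => G
  | G, M :: Ms => Lam.applyAll (Lam.app G M) Ms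


namespace Boehm

open Lam

/-! ### Simultaneous instantiation by closed terms -/

/-- Replace variable `k + i` by the closed term `ρ i`, keep the variables below `k`. -/
def inst : Lam → ℕ → (ℕ → Lam) → Lam
  | var m, k, ρ => if m < k then var m else ρ (m - k)
  | app M N, k, ρ => app (inst M k ρ) (inst N k ρ)
  | lam M, k, ρ => lam (inst M (k + 1) ρ)

/-- Extension of an environment. -/
def cons {α : Type} (a : α) (ρ : ℕ → α) : ℕ → α
  | 0 => a
  | n + 1 => ρ n

@[simp] theorem cons_zero {α : Type} (a : α) (ρ : ℕ → α) : cons a ρ 0 = a := rfl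
@[simp] theorem cons_succ {α : Type} (a : α) (ρ : ℕ → α) (n : ℕ) :
    cons a ρ (n + 1) = ρ n := rfl
@[simp] theorem cons_one {α : Type} (a : α) (ρ : ℕ → α) : cons a ρ 1 = ρ 0 := rfl
@[simp] theorem cons_two {α : Type} (a : α) (ρ : ℕ → α) : cons a ρ 2 = ρ 1 := rfl
@[simp] theorem cons_three {α : Type} (a : α) (ρ : ℕ → α) : cons a ρ 3 = ρ 2 := rfl
@[simp] theorem cons_four {α : Type} (a : α) (ρ : ℕ → α) : cons a ρ 4 = ρ 3 := rfl
@[simp] theorem cons_five {α : Type} (a : α) (ρ : ℕ → α) : cons a ρ 5 = ρ 4 := rfl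
@[simp] theorem cons_six {α : Type} (a : α) (ρ : ℕ → α) : cons a ρ 6 = ρ 5 := rfl

theorem lift_of_free (M : Lam) : ∀ k, (∀ n, HasFree M n → n < k) → lift k M = M := by
  induction M with
  | var m => intro k h; have := h m rfl; simp [lift, this]
  | app M N ihM ihN =>
    intro k h
    simp only [lift]
    rw [ihM k (fun n hn => h n (Or.inl hn)), ihN k (fun n hn => h n (Or.inr hn))]
  | lam M ih =>
    intro k h
    simp only [lift]
    rw [ih (k + 1)]
    intro n hn
    cases n with
    | zero => omega
    | succ n => have := h n hn; omega

theorem subst_of_free (M : Lam) : ∀ k N, (∀ n, HasFree M n → n < k) → subst M k N = M := by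
  induction M with
  | var m =>
    intro k N h
    have := h m rfl
    simp only [subst]
    rw [if_neg (by omega), if_neg (by omega)]
  | app M N ihM ihN =>
    intro k L h
    simp only [subst]
    rw [ihM k L (fun n hn => h n (Or.inl hn)), ihN k L (fun n hn => h n (Or.inr hn))]
  | lam M ih =>
    intro k N h
    simp only [subst]
    rw [ih (k + 1)]
    intro n hn
    cases n with
    | zero => omega
    | succ n => have := h n hn; omega

theorem lift_closed {M : Lam} (h : Closed M) (k : ℕ) : lift k M = M :=
  lift_of_free M k fun n hn => (h n hn).elim

theorem subst_closed {M : Lam} (h : Closed M) (k : ℕ) (N : Lam) : subst M k N = M :=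
  subst_of_free M k N fun n hn => (h n hn).elim

theorem subst_inst (M : Lam) : ∀ (k : ℕ) (ρ : ℕ → Lam) (N : Lam), (∀ i, Closed (ρ i)) →
    Closed N → subst (inst M (k + 1) ρ) k N = inst M k (cons N ρ) := by
  induction M with
  | var m =>
    intro k ρ N hρ hN
    rcases lt_trichotomy m k with h | h | h
    · have h1 : m < k + 1 := by omega
      have h2 : ¬ m = k := by omega
      have h3 : ¬ k < m := by omega
      simp [inst, h, h1, subst, h2, h3]
    · subst h
      simp [inst, subst]
    · have h1 : ¬ m < k + 1 := by omega
      have h2 : ¬ m < k := by omega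
      obtain ⟨j, rfl⟩ : ∃ j, m = k + 1 + j := ⟨m - (k + 1), by omega⟩
      have h3 : k + 1 + j - k = j + 1 := by omega
      simp only [inst, h1, h2, if_false, h3, cons_succ]
      rw [subst_closed (hρ _)]
      congr 1; omega
  | app M N ihM ihN =>
    intro k ρ L hρ hL
    simp only [inst, subst]
    rw [ihM k ρ L hρ hL, ihN k ρ L hρ hL]
  | lam M ih =>
    intro k ρ N hρ hN
    simp only [inst, subst]
    rw [lift_closed hN, ih (k + 1) ρ N hρ hN]

theorem free_inst (M : Lam) : ∀ (k : ℕ) (ρ : ℕ → Lam), (∀ i, Closed (ρ i)) →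
    ∀ n, HasFree (inst M k ρ) n → n < k := by
  induction M with
  | var m =>
    intro k ρ hρ n hn
    simp only [inst] at hn
    split at hn
    · simp only [HasFree] at hn; omega
    · exact (hρ _ _ hn).elim
  | app M N ihM ihN =>
    intro k ρ hρ n hn
    rcases hn with hn | hn
    · exact ihM k ρ hρ n hn
    · exact ihN k ρ hρ n hn
  | lam M ih =>
    intro k ρ hρ n hn
    have := ih (k + 1) ρ hρ (n + 1) hn
    omega

theorem closed_inst (M : Lam) (ρ : ℕ → Lam) (hρ : ∀ i, Closed (ρ i)) : Closed (inst M 0 ρ) :=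
  fun n hn => absurd (free_inst M 0 ρ hρ n hn) (by omega)

theorem inst_of_free (M : Lam) : ∀ k ρ, (∀ n, HasFree M n → n < k) → inst M k ρ = M := by
  induction M with
  | var m => intro k ρ h; have := h m rfl; simp [inst, this]
  | app M N ihM ihN =>
    intro k L h
    simp only [inst]
    rw [ihM k L (fun n hn => h n (Or.inl hn)), ihN k L (fun n hn => h n (Or.inr hn))]
  | lam M ih =>
    intro k N h
    simp only [inst]
    rw [ih (k + 1)]
    intro n hn
    cases n with
    | zero => omega
    | succ n => have := h n hn; omega

theorem inst_lift (M : Lam) : ∀ (k : ℕ) (ρ : ℕ → Lam) (N : Lam),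
    inst (lift k M) k (cons N ρ) = inst M k ρ := by
  induction M with
  | var m =>
    intro k ρ N
    by_cases h : m < k
    · simp [lift, inst, h]
    · have h1 : ¬ m + 1 < k := by omega
      have h2 : m + 1 - k = (m - k) + 1 := by omega
      simp [lift, inst, h, h1, h2]
  | app M N ihM ihN => intro k ρ L; simp only [lift, inst, ihM, ihN]
  | lam M ih => intro k ρ N; simp only [lift, inst, ih]

/-! ### The combinatory algebra of closed terms modulo β -/

theorem betaEq_app {M M' N N' : Lam} (h : BetaEq M M') (h' : BetaEq N N') :
    BetaEq (app M N) (app M' N') := by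
  have h1 : BetaEq (app M N) (app M' N) := by
    induction h with
    | rel _ _ h => exact .rel _ _ (.appL _ h)
    | refl => exact .refl _
    | symm _ _ _ ih => exact .symm _ _ ih
    | trans _ _ _ _ _ ih1 ih2 => exact .trans _ _ _ ih1 ih2
  have h2 : BetaEq (app M' N) (app M' N') := by
    clear h1
    induction h' with
    | rel _ _ h => exact .rel _ _ (.appR _ h)
    | refl => exact .refl _
    | symm _ _ _ ih => exact .symm _ _ ih
    | trans _ _ _ _ _ ih1 ih2 => exact .trans _ _ _ ih1 ih2
  exact .trans _ _ _ h1 h2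

theorem closed_app {M N : Lam} (hM : Closed M) (hN : Closed N) : Closed (app M N) := by
  rintro n (h | h)
  · exact hM n h
  · exact hN n h

/-- Closed terms. -/
abbrev CL := {M : Lam // Closed M}

/-- β-equivalence of closed terms. -/
def clSetoid : Setoid CL where
  r M N := BetaEq M.1 N.1
  iseqv := ⟨fun _ => .refl _, fun h => .symm _ _ h, fun h h' => .trans _ _ _ h h'⟩

/-- Closed terms modulo β. -/
def A : Type := Quotient clSetoid

/-- The class of a closed term. -/
def mk (M : Lam) (h : Closed M) : A := Quotient.mk clSetoid ⟨M, h⟩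

theorem mk_eq {M N : Lam} {hM : Closed M} {hN : Closed N} : mk M hM = mk N hN ↔ BetaEq M N :=
  ⟨fun h => Quotient.exact h, fun h => Quotient.sound (s := clSetoid) h⟩

/-- A chosen representative. -/
noncomputable def out (a : A) : Lam := (Quotient.out a).1

theorem closed_out (a : A) : Closed (out a) := (Quotient.out a).2

theorem mk_out (a : A) : mk (out a) (closed_out a) = a := Quotient.out_eq a

noncomputable instance : Mul A :=
  ⟨fun a b => mk (app (out a) (out b)) (closed_app (closed_out a) (closed_out b))⟩

theorem mk_mul {M N : Lam} (hM : Closed M) (hN : Closed N) :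
    mk M hM * mk N hN = mk (app M N) (closed_app hM hN) := by
  refine mk_eq.2 (betaEq_app ?_ ?_)
  · exact mk_eq.1 (mk_out (mk M hM))
  · exact mk_eq.1 (mk_out (mk N hN))

/-- Value of a term in an environment. -/
noncomputable def ev (M : Lam) (ρ : ℕ → A) : A :=
  mk (inst M 0 (fun i => out (ρ i))) (closed_inst _ _ fun i => closed_out (ρ i))

@[simp] theorem ev_var (i : ℕ) (ρ : ℕ → A) : ev (var i) ρ = ρ i := mk_out (ρ i)

@[simp] theorem ev_app (M N : Lam) (ρ : ℕ → A) : ev (app M N) ρ = ev M ρ * ev N ρ :=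
  (mk_mul _ _).symm

theorem out_cons (a : A) (ρ : ℕ → A) :
    (fun i => out (cons a ρ i)) = cons (out a) (fun i => out (ρ i)) := by
  funext i; cases i <;> rfl

@[simp] theorem ev_lam (M : Lam) (ρ : ℕ → A) (a : A) :
    ev (lam M) ρ * a = ev M (cons a ρ) := by
  conv_lhs => rw [← mk_out a]
  rw [ev, mk_mul, ev, mk_eq, out_cons]
  rw [← subst_inst M 0 _ _ (fun i => closed_out (ρ i)) (closed_out a)]
  exact .rel _ _ (.beta _ _)

theorem ev_closed (M : Lam) (h : Closed M) (ρ : ℕ → A) : ev M ρ = mk M h := by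
  simp only [ev, inst_of_free M 0 (fun i => out (ρ i)) (fun n hn => (h n hn).elim)]

theorem ev_lift (M : Lam) (ρ : ℕ → A) (a : A) : ev (lift 0 M) (cons a ρ) = ev M ρ := by
  simp only [ev, out_cons, inst_lift]

/-- Iterated application. -/
noncomputable def apps : A → List A → A
  | a, [] => a
  | a, b :: l => apps (a * b) l

@[simp] theorem apps_nil (a : A) : apps a [] = a := rfl
@[simp] theorem apps_cons (a b : A) (l : List A) : apps a (b :: l) = apps (a * b) l := rfl

@[simp] theorem apps_append (l l' : List A) : ∀ a, apps a (l ++ l') = apps (apps a l) l' := by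
  induction l with
  | nil => intro a; rfl
  | cons b l ih => intro a; exact ih _

theorem ev_applyAll (Ms : List Lam) (ρ : ℕ → A) : ∀ G,
    ev (applyAll G Ms) ρ = apps (ev G ρ) (Ms.map fun M => ev M ρ) := by
  induction Ms with
  | nil => intro G; rfl
  | cons M Ms ih => intro G; simp [applyAll, ih]

theorem closed_applyAll (Ms : List Lam) (hMs : ∀ M ∈ Ms, Closed M) : ∀ G, Closed G →
    Closed (applyAll G Ms) := by
  induction Ms with
  | nil => intro G hG; exact hG
  | cons M Ms ih =>
    intro G hG
    exact ih (fun M hM => hMs M (by simp [hM])) _ (closed_app hG (hMs M (by simp)))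

/-! ### Basic combinators -/

theorem closed_T : Closed T := by intro n; simp [T, HasFree]
theorem closed_F : Closed F := by intro n; simp [F, HasFree]

/-- True. -/
noncomputable def tt : A := mk T closed_T
/-- False. -/
noncomputable def ff : A := mk F closed_F
/-- A default environment. -/
noncomputable def e0 : ℕ → A := fun _ => tt

@[simp] theorem tt_mul (a b : A) : tt * a * b = a := by
  rw [tt, ← ev_closed T closed_T e0]; simp [T]

@[simp] theorem ff_mul (a b : A) : ff * a * b = b := by
  rw [ff, ← ev_closed F closed_F e0]; simp [F]

/-- Identity. -/
noncomputable def idA : A := ev (lam (var 0)) e0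

@[simp] theorem idA_mul (a : A) : idA * a = a := by simp [idA]

/-- The pairing combinator. -/
noncomputable def prC : A := ev (lam (lam (lam (app (app (var 0) (var 2)) (var 1))))) e0

/-- Pairing. -/
noncomputable def pr (a b : A) : A := prC * a * b

@[simp] theorem pr_mul (a b c : A) : pr a b * c = c * a * b := by simp [pr, prC]

/-- A function is represented by an element. -/
def Rep (f : A → A) : Prop := ∃ a : A, ∀ x, a * x = f x

theorem rep_id : Rep (fun x => x) := ⟨idA, idA_mul⟩
theorem rep_const (c : A) : Rep (fun _ => c) := ⟨tt * c, fun x => by simp⟩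
theorem rep_app {f g : A → A} (hf : Rep f) (hg : Rep g) : Rep (fun x => f x * g x) := by
  obtain ⟨a, ha⟩ := hf
  obtain ⟨b, hb⟩ := hg
  exact ⟨ev (lam (app (app (var 1) (var 0)) (app (var 2) (var 0)))) (cons a (cons b e0)),
    fun x => by simp [ha, hb]⟩

/-- A binary function is represented by an element. -/
def Rep2 (f : A → A → A) : Prop := ∃ a : A, ∀ x y, a * x * y = f x y

theorem rep2_fst : Rep2 (fun x _ => x) := ⟨tt, tt_mul⟩
theorem rep2_snd : Rep2 (fun _ y => y) := ⟨ff, ff_mul⟩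
theorem rep2_const (c : A) : Rep2 (fun _ _ => c) := ⟨tt * (tt * c), fun x y => by simp⟩
theorem rep2_app {f g : A → A → A} (hf : Rep2 f) (hg : Rep2 g) :
    Rep2 (fun x y => f x y * g x y) := by
  obtain ⟨a, ha⟩ := hf
  obtain ⟨b, hb⟩ := hg
  exact ⟨ev (lam (lam (app (app (app (var 2) (var 1)) (var 0))
    (app (app (var 3) (var 1)) (var 0))))) (cons a (cons b e0)), fun x y => by simp [ha, hb]⟩

theorem exists_fix (g : A) : ∃ y : A, g * y = y := by
  obtain ⟨w, hw⟩ : Rep (fun x => g * (x * x)) :=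
    rep_app (rep_const g) (rep_app rep_id rep_id)
  exact ⟨w * w, (hw w).symm⟩

theorem exists_rec {f : A → A → A} (hf : Rep2 f) : ∃ R : A, ∀ t, R * t = f R t := by
  obtain ⟨g, hg⟩ := hf
  obtain ⟨R, hR⟩ := exists_fix g
  exact ⟨R, fun t => by rw [← hg, hR]⟩

/-! ### Definability of recursive functions -/

/-- Tuples. -/
noncomputable def tup : List A → A
  | [] => tt
  | a :: l => pr a (tup l)

theorem exists_get (i : ℕ) : ∃ G : A, ∀ (l : List A) (h : i < l.length), G * tup l = l[i] := by
  induction i with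
  | zero =>
    obtain ⟨G, hG⟩ : Rep (fun t => t * tt) := rep_app rep_id (rep_const _)
    refine ⟨G, fun l h => ?_⟩
    cases l with
    | nil => simp at h
    | cons a l => simp [hG, tup]
  | succ i ih =>
    obtain ⟨G', hG'⟩ := ih
    obtain ⟨G, hG⟩ : Rep (fun t => G' * (t * ff)) :=
      rep_app (rep_const _) (rep_app rep_id (rep_const _))
    refine ⟨G, fun l h => ?_⟩
    cases l with
    | nil => simp at h
    | cons a l => simpa [hG, tup] using hG' l (by simpa using h)

theorem exists_tup (Gs : List A) : ∃ H : A, ∀ t, H * t = tup (Gs.map fun G => G * t) := by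
  induction Gs with
  | nil => exact rep_const _
  | cons G Gs ih =>
    obtain ⟨H, hH⟩ := ih
    obtain ⟨K, hK⟩ : Rep (fun t => prC * (G * t) * (H * t)) :=
      rep_app (rep_app (rep_const _) (rep_app (rep_const _) rep_id)) (rep_app (rep_const _) rep_id)
    exact ⟨K, fun t => by rw [hK]; beta_reduce; rw [hH]; rfl⟩

theorem exists_curry (p : ℕ) : ∃ C : A, ∀ (G : A) (l : List A), l.length = p →
    apps (C * G) l = G * tup l := by
  induction p with
  | zero =>
    obtain ⟨C, hC⟩ : Rep (fun G => G * tt) := rep_app rep_id (rep_const _)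
    refine ⟨C, fun G l hl => ?_⟩
    obtain rfl := List.length_eq_zero_iff.1 hl
    simp [hC, tup]
  | succ p ih =>
    obtain ⟨C, hC⟩ := ih
    -- `fun G a => C (fun t => G (pr a t))`
    refine ⟨ev (lam (lam (app (var 2) (lam (app (var 2) (app (app (var 4) (var 1)) (var 0)))))))
      (cons C (cons prC e0)), fun G l hl => ?_⟩
    cases l with
    | nil => simp at hl
    | cons a l =>
      rw [apps_cons]
      simp only [ev_lam, ev_app, ev_var, cons_zero, cons_one, cons_two]
      rw [hC _ l (by simpa using hl)]
      simp [tup, pr]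

/-- Definability of partial functions on vectors, with uncurried arguments. -/
def Def (D : ℕ → A) {p : ℕ} (f : List.Vector ℕ p →. ℕ) : Prop :=
  ∃ G : A, ∀ v y, y ∈ f v → G * tup (v.toList.map D) = D y

theorem mem_mOfFn {n : ℕ} : ∀ (f : Fin n → Part ℕ) (v : List.Vector ℕ n),
    v ∈ List.Vector.mOfFn f → ∀ i, v.get i ∈ f i := by
  induction n with
  | zero => intro f v _ i; exact i.elim0
  | succ n ih =>
    intro f v hv i
    simp only [List.Vector.mOfFn, Part.bind_eq_bind, Part.mem_bind_iff] at hv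
    obtain ⟨a, ha, w, hw, hv⟩ := hv
    obtain rfl : v = a ::ᵥ w := by simpa using hv
    refine Fin.cases ?_ (fun j => ?_) i
    · simpa using ha
    · simpa using ih _ w hw j

theorem def_comp {D : ℕ → A} {m n : ℕ} {f : List.Vector ℕ n →. ℕ}
    (g : Fin n → List.Vector ℕ m →. ℕ) (hf : Def D f) (hg : ∀ i, Def D (g i)) :
    Def D (fun v => (List.Vector.mOfFn fun i => g i v) >>= f) := by
  obtain ⟨G, hG⟩ := hf
  choose Gs hGs using hg
  obtain ⟨H, hH⟩ := exists_tup (List.ofFn Gs)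
  obtain ⟨K, hK⟩ : Rep (fun t => G * (H * t)) :=
    rep_app (rep_const _) (rep_app (rep_const _) rep_id)
  refine ⟨K, fun v y hy => ?_⟩
  obtain ⟨w, hw, hy⟩ := Part.mem_bind_iff.1 hy
  have hw' := mem_mOfFn _ w hw
  rw [hK]
  beta_reduce
  rw [hH, ← hG w y hy]
  congr 2
  apply List.ext_getElem
  · simp
  · intro i h1 h2
    have hi : i < n := by simpa using h1
    simp only [List.getElem_map, List.getElem_ofFn]
    rw [hGs ⟨i, hi⟩ v _ (hw' ⟨i, hi⟩)]
    simp [List.Vector.get_eq_get_toList]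

theorem def_total_comp {D : ℕ → A} {m n : ℕ} {f : List.Vector ℕ n → ℕ}
    (g : Fin n → List.Vector ℕ m → ℕ) (hf : Def D (f : List.Vector ℕ n →. ℕ))
    (hg : ∀ i, Def D (g i : List.Vector ℕ m →. ℕ)) :
    Def D ((fun v => f (List.Vector.ofFn fun i => g i v) : List.Vector ℕ m → ℕ) :
      List.Vector ℕ m →. ℕ) := by
  have := def_comp (fun i => (g i : List.Vector ℕ m →. ℕ)) hf hg
  obtain ⟨G, hG⟩ := this
  refine ⟨G, fun v y hy => hG v y ?_⟩
  refine Part.mem_bind_iff.2 ⟨List.Vector.ofFn fun i => g i v, ?_, hy⟩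
  simp

theorem def_prim {D : ℕ → A} {s p z : A} (hs : ∀ n, s * D n = D (n + 1)) (hp : ∀ n, p * D (n + 1) = D n)
    (hz : z * D 0 = tt) (hz' : ∀ n, z * D (n + 1) = ff)
    {n : ℕ} {f : List.Vector ℕ n → ℕ} (hf : Nat.Primrec' f) :
    Def D (f : List.Vector ℕ n →. ℕ) := by
  induction hf with
  | zero => 
    obtain ⟨G, hG⟩ := rep_const (D 0)
    exact ⟨G, fun v y hy => by rw [hG]; simp at hy; rw [hy]⟩
  | succ =>
    obtain ⟨G, hG⟩ : Rep (fun t => s * (t * tt)) :=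
      rep_app (rep_const _) (rep_app rep_id (rep_const _))
    refine ⟨G, fun v y hy => ?_⟩
    obtain rfl : y = v.head + 1 := by simpa using hy
    obtain ⟨a, w, rfl⟩ := v.exists_eq_cons
    simp [hG, tup, hs]
  | get i =>
    obtain ⟨G, hG⟩ := exists_get i
    refine ⟨G, fun v y hy => ?_⟩
    obtain rfl : y = v.get i := by simpa using hy
    rw [hG _ (by simp)]
    simp [List.Vector.get_eq_get_toList]
  | comp g _ _ ihf ihg => exact def_total_comp g ihf ihg
  | @prec n f g _ _ ihf ihg =>
    obtain ⟨f', hf'⟩ := ihf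
    obtain ⟨g', hg'⟩ := ihg
    obtain ⟨R, hR⟩ := exists_rec (f := fun R t => z * (t * tt) * (f' * (t * ff)) *
        (g' * (prC * (p * (t * tt)) * (prC * (R * (prC * (p * (t * tt)) * (t * ff))) * (t * ff))))) (by
      repeat' first | exact rep2_fst | exact rep2_snd | exact rep2_const _ | apply rep2_app)
    refine ⟨R, fun v y hy => ?_⟩
    obtain ⟨a, w, rfl⟩ := v.exists_eq_cons
    simp only [List.Vector.head_cons, List.Vector.tail_cons, PFun.coe_val, Part.mem_some_iff] at hy
    simp only [List.Vector.toList_cons, List.map_cons, tup]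
    subst hy
    induction a with
    | zero =>
      rw [hR]
      simp only [pr_mul, tt_mul, ff_mul, hz]
      exact hf' w _ (by simp)
    | succ a ih =>
      rw [hR]
      simp only [pr_mul, tt_mul, ff_mul, hz', hp]
      have e : prC * D a * tup (List.map D w.toList) = pr (D a) (tup (List.map D w.toList)) := rfl
      rw [e, ih]
      exact hg' (a ::ᵥ _ ::ᵥ w) _ (by simp)

theorem def_part {D : ℕ → A} {s p z : A} (hs : ∀ n, s * D n = D (n + 1)) (hp : ∀ n, p * D (n + 1) = D n)
    (hz : z * D 0 = tt) (hz' : ∀ n, z * D (n + 1) = ff)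
    {n : ℕ} {f : List.Vector ℕ n →. ℕ} (hf : Nat.Partrec' f) : Def D f := by
  induction hf with
  | prim h => exact def_prim hs hp hz hz' h
  | comp g _ _ ihf ihg => exact def_comp g ihf ihg
  | @rfind n f _ ihf =>
    obtain ⟨f', hf'⟩ := ihf
    obtain ⟨R, hR⟩ := exists_rec (f := fun R t => z * (f' * t) * (t * tt)
        * (R * (prC * (s * (t * tt)) * (t * ff)))) (by
      repeat' first | exact rep2_fst | exact rep2_snd | exact rep2_const _ | apply rep2_app)
    obtain ⟨G, hG⟩ : Rep (fun t => R * (prC * D 0 * t)) :=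
      rep_app (rep_const _) (rep_app (rep_const _) rep_id)
    refine ⟨G, fun v y hy => ?_⟩
    obtain ⟨h1, h2⟩ := Nat.mem_rfind.1 hy
    have h1' : f (y ::ᵥ v) = 0 := by simpa using h1
    have h2' : ∀ m < y, f (m ::ᵥ v) ≠ 0 := fun m hm => by simpa using h2 hm
    have hf'' : ∀ m, f' * pr (D m) (tup (v.toList.map D)) = D (f (m ::ᵥ v)) := fun m =>
      hf' (m ::ᵥ v) _ (by simp)
    rw [hG]
    have key : ∀ k m, m + k = y → R * pr (D m) (tup (v.toList.map D)) = D y := by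
      intro k
      induction k with
      | zero =>
        intro m hm
        obtain rfl : m = y := by omega
        rw [hR, hf'', h1', hz]
        simp
      | succ k ih =>
        intro m hm
        obtain ⟨j, hj⟩ := Nat.exists_eq_succ_of_ne_zero (h2' m (by omega))
        rw [hR, hf'', hj, hz', ff_mul]
        simp only [pr_mul, tt_mul, ff_mul, hs]
        exact ih (m + 1) (by omega)
    exact key y 0 (by omega)

theorem def_computable {D : ℕ → A} {s p z : A} (hs : ∀ n, s * D n = D (n + 1)) (hp : ∀ n, p * D (n + 1) = D n)
    (hz : z * D 0 = tt) (hz' : ∀ n, z * D (n + 1) = ff)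
    {k : ℕ} {φ : (Fin k → ℕ) → ℕ} (hφ : Computable φ) :
    ∃ G : A, ∀ ns : Fin k → ℕ, apps G (List.ofFn fun i => D (ns i)) = D (φ ns) := by
  have h : Partrec ((fun v : List.Vector ℕ k => φ v.get : List.Vector ℕ k → ℕ) :
      List.Vector ℕ k →. ℕ) := hφ.comp Primrec.vector_get'.to_comp
  obtain ⟨G, hG⟩ := def_part hs hp hz hz' (Nat.Partrec'.of_part h)
  obtain ⟨C, hC⟩ := exists_curry k
  refine ⟨C * G, fun ns => ?_⟩
  rw [hC _ _ (by simp)]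
  have := hG (List.Vector.ofFn ns) (φ ns) (by
    have : (List.Vector.ofFn ns).get = ns := by funext i; simp
    simp [this])
  rw [← this]
  congr 2
  simp [List.Vector.toList_ofFn, List.map_ofFn, Function.comp_def]

/-! ### Separation (Böhm's theorem for closed terms) -/

/-- Separability. -/
def Sep (x y : A) : Prop := ∃ a : A, a * x = tt ∧ a * y = ff

theorem Sep.symm {x y : A} (h : Sep x y) : Sep y x := by
  obtain ⟨a, h1, h2⟩ := h
  obtain ⟨b, hb⟩ : Rep (fun x => a * x * ff * tt) :=
    rep_app (rep_app (rep_app (rep_const _) rep_id) (rep_const _)) (rep_const _)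
  exact ⟨b, by simp [hb, h2], by simp [hb, h1]⟩

theorem Sep.of_mul {x y : A} (c : A) (h : Sep (x * c) (y * c)) : Sep x y := by
  obtain ⟨a, h1, h2⟩ := h
  obtain ⟨b, hb⟩ : Rep (fun x => a * (x * c)) :=
    rep_app (rep_const _) (rep_app rep_id (rep_const _))
  exact ⟨b, by simp [hb, h1], by simp [hb, h2]⟩

theorem Sep.of_apps (l : List A) : ∀ {x y : A}, Sep (apps x l) (apps y l) → Sep x y := by
  induction l with
  | nil => intro x y h; exact h
  | cons c l ih => intro x y h; exact Sep.of_mul c (ih h)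

theorem sep_tt_ff : Sep tt ff := ⟨idA, by simp, by simp⟩

theorem exists_eat (n : ℕ) : ∃ E : A, ∀ (u : A) (l : List A), l.length = n →
    apps (E * u) l = u := by
  induction n with
  | zero =>
    refine ⟨idA, fun u l hl => ?_⟩
    obtain rfl := List.length_eq_zero_iff.1 hl
    simp
  | succ n ih =>
    obtain ⟨E, hE⟩ := ih
    obtain ⟨E', hE'⟩ : Rep2 (fun u _ => E * u) := rep2_app (rep2_const _) rep2_fst
    refine ⟨E', fun u l hl => ?_⟩
    cases l with
    | nil => simp at hl
    | cons a l => rw [apps_cons, hE', hE u l (by simpa using hl)]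

theorem exists_sel (k : ℕ) : ∀ n, k < n → ∃ P : A, ∀ (l : List A) (h : k < l.length),
    l.length = n → apps P l = l[k] := by
  induction k with
  | zero =>
    intro n hn
    obtain ⟨n, rfl⟩ : ∃ m, n = m + 1 := ⟨n - 1, by omega⟩
    obtain ⟨E, hE⟩ := exists_eat n
    refine ⟨E, fun l h hl => ?_⟩
    cases l with
    | nil => simp at h
    | cons a l => simpa using hE a l (by simpa using hl)
  | succ k ih =>
    intro n hn
    obtain ⟨n, rfl⟩ : ∃ m, n = m + 1 := ⟨n - 1, by omega⟩
    obtain ⟨P, hP⟩ := ih n (by omega)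
    refine ⟨tt * P, fun l h hl => ?_⟩
    cases l with
    | nil => simp at h
    | cons a l => simpa using hP l (by simpa using h) (by simpa using hl)

theorem exists_gamma (n : ℕ) : ∃ g : A, ∀ (c : A) (l : List A) (b : A), l.length = n →
    apps (g * c) l * b = apps (c * b) l := by
  induction n with
  | zero =>
    refine ⟨idA, fun c l b hl => ?_⟩
    obtain rfl := List.length_eq_zero_iff.1 hl
    simp
  | succ n ih =>
    obtain ⟨g, hg⟩ := ih
    -- `fun c x => g (fun b => c b x)`
    refine ⟨ev (lam (lam (app (var 2) (lam (app (app (var 2) (var 0)) (var 1))))))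
      (cons g e0), fun c l b hl => ?_⟩
    cases l with
    | nil => simp at hl
    | cons a l =>
      rw [apps_cons]
      simp only [ev_lam, ev_app, ev_var, cons_zero, cons_one, cons_two]
      rw [hg _ l b (by simpa using hl)]
      simp

theorem exists_alpha : ∃ α : ℕ → A, ∀ n (l : List A) (b : A), l.length = n →
    apps (α n) l * b = apps b l := by
  choose g hg using exists_gamma
  exact ⟨fun n => g n * idA, fun n l b hl => by rw [hg n _ l b hl, idA_mul]⟩

/-- The rotating tuple combinators `λ x₁ … xₙ b. b x₁ … xₙ`. -/
noncomputable def alpha : ℕ → A := exists_alpha.choose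

theorem alpha_spec (n : ℕ) (l : List A) (b : A) (h : l.length = n) :
    apps (alpha n) l * b = apps b l := exists_alpha.choose_spec n l b h

theorem sep_of_lt {n n' : ℕ} (l l' : List A) (h : l.length ≤ n) (h' : l'.length ≤ n')
    (hlt : n - l.length < n' - l'.length) : Sep (apps (alpha n) l) (apps (alpha n') l') := by
  obtain ⟨q, hq⟩ : ∃ q, n' - l'.length = n - l.length + 1 + q :=
    ⟨n' - l'.length - (n - l.length + 1), by omega⟩
  obtain ⟨E, hE⟩ := exists_eat (n + q + 1)
  obtain ⟨E', hE'⟩ := exists_eat n'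
  apply Sep.of_apps (List.replicate (n - l.length) tt)
  apply Sep.of_mul (E * tt)
  apply Sep.of_apps (List.replicate q tt)
  apply Sep.of_mul (E' * ff)
  have e1 : apps (apps (apps (alpha n) l) (List.replicate (n - l.length) tt) * (E * tt))
      (List.replicate q tt) * (E' * ff) = tt := by
    rw [← apps_append, alpha_spec n _ _ (by simp; omega), ← apps_append]
    have := hE tt ((l ++ List.replicate (n - l.length) tt) ++ List.replicate q tt ++ [E' * ff])
      (by simp; omega)
    rw [apps_append _ [E' * ff]] at this
    exact this
  have e2 : apps (apps (apps (alpha n') l') (List.replicate (n - l.length) tt) * (E * tt))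
      (List.replicate q tt) * (E' * ff) = ff := by
    have := alpha_spec n' (l' ++ List.replicate (n - l.length) tt ++ [E * tt] ++
      List.replicate q tt) (E' * ff) (by simp; omega)
    rw [hE' ff _ (by simp; omega), apps_append, apps_append _ [E * tt], apps_append] at this
    exact this
  rw [e1, e2]
  exact sep_tt_ff

theorem sep_of_ne {n n' : ℕ} (l l' : List A) (h : l.length ≤ n) (h' : l'.length ≤ n')
    (hne : n - l.length ≠ n' - l'.length) : Sep (apps (alpha n) l) (apps (alpha n') l') := by
  rcases lt_or_gt_of_ne hne with hlt | hlt
  · exact sep_of_lt l l' h h' hlt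
  · exact (sep_of_lt l' l h' h hlt).symm

theorem sep_of_arg {n k : ℕ} (l l' : List A) (h : l.length ≤ n) (hl : l'.length = l.length)
    (hk : k < l.length) (hs : Sep (l[k]) (l'[k])) :
    Sep (apps (alpha n) l) (apps (alpha n) l') := by
  obtain ⟨P, hP⟩ := exists_sel k n (by omega)
  apply Sep.of_apps (List.replicate (n - l.length) tt)
  apply Sep.of_mul P
  rw [← apps_append, ← apps_append, alpha_spec n _ _ (by simp; omega),
    alpha_spec n _ _ (by simp; omega), hP _ (by simp; omega) (by simp; omega),
    hP _ (by simp; omega) (by simp; omega), List.getElem_append_left hk,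
    List.getElem_append_left (by omega)]
  exact hs

/-! Syntax of normal forms -/

theorem nf_app {M N : Lam} : IsBetaEtaNormal (app M N) ↔
    (∀ M', M ≠ lam M') ∧ IsBetaEtaNormal M ∧ IsBetaEtaNormal N := by
  cases M <;> simp [IsBetaEtaNormal]

theorem nf_lam {M : Lam} : IsBetaEtaNormal (lam M) ↔
    IsBetaEtaNormal M ∧ ∀ M', M = app M' (var 0) → HasFree M' 0 := by
  cases M with
  | var m => simp [IsBetaEtaNormal]
  | lam M => simp [IsBetaEtaNormal]
  | app M N =>
    cases N with
    | lam N => simp [IsBetaEtaNormal]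
    | app N N' => simp [IsBetaEtaNormal]
    | var m =>
      cases m with
      | zero => simp [IsBetaEtaNormal, and_comm]
      | succ m => simp [IsBetaEtaNormal]

theorem free_lift_lt (M : Lam) : ∀ k n, n < k → (HasFree (lift k M) n ↔ HasFree M n) := by
  induction M with
  | var m =>
    intro k n h
    by_cases hm : m < k
    · simp [lift, hm]
    · simp [lift, hm, HasFree]; omega
  | app M N ihM ihN => intro k n h; simp [lift, HasFree, ihM k n h, ihN k n h]
  | lam M ih => intro k n h; simp [lift, HasFree, ih (k + 1) (n + 1) (by omega)]

theorem not_free_lift (M : Lam) : ∀ k, ¬ HasFree (lift k M) k := by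
  induction M with
  | var m =>
    intro k
    by_cases hm : m < k
    · simp [lift, hm, HasFree]; omega
    · simp [lift, hm, HasFree]; omega
  | app M N ihM ihN => intro k; simp [lift, HasFree, ihM k, ihN k]
  | lam M ih => intro k; simp [lift, HasFree, ih (k + 1)]

theorem free_lift_bound (M : Lam) : ∀ k s, (∀ n, HasFree M n → n < s) →
    ∀ n, HasFree (lift k M) n → n < s + 1 := by
  induction M with
  | var m =>
    intro k s h n hn
    have := h m rfl
    simp only [lift] at hn
    split at hn <;> simp only [HasFree] at hn <;> omega
  | app M N ihM ihN =>
    intro k s h n hn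
    rcases hn with hn | hn
    · exact ihM k s (fun n hn => h n (Or.inl hn)) n hn
    · exact ihN k s (fun n hn => h n (Or.inr hn)) n hn
  | lam M ih =>
    intro k s h n hn
    have := ih (k + 1) (s + 1) (fun n hn => by
      cases n with
      | zero => omega
      | succ n => have := h n hn; omega) (n + 1) hn
    omega

theorem nf_lift (M : Lam) : ∀ k, IsBetaEtaNormal M → IsBetaEtaNormal (lift k M) := by
  induction M with
  | var m => intro k _; simp only [lift]; split <;> simp [IsBetaEtaNormal]
  | app M N ihM ihN =>
    intro k h
    obtain ⟨h1, h2, h3⟩ := nf_app.1 h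
    refine nf_app.2 ⟨?_, ihM k h2, ihN k h3⟩
    cases M with
    | var m => intro M'; simp only [lift]; split <;> simp
    | app _ _ => intro M'; simp [lift]
    | lam M => exact (h1 M rfl).elim
  | lam M ih =>
    intro k h
    obtain ⟨h1, h2⟩ := nf_lam.1 h
    refine nf_lam.2 ⟨ih _ h1, fun M' hM' => ?_⟩
    cases M with
    | var m => simp only [lift] at hM'; split at hM' <;> simp at hM'
    | lam M => simp [lift] at hM'
    | app M N =>
      simp only [lift, app.injEq] at hM'
      obtain ⟨rfl, hN⟩ := hM'
      refine (free_lift_lt M (k + 1) 0 (by omega)).2 (h2 M ?_)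
      cases N with
      | lam N => simp [lift] at hN
      | app _ _ => simp [lift] at hN
      | var m =>
        simp only [lift] at hN
        split at hN
        · simpa using hN
        · simp at hN

/-- Weight of a term. -/
def wt : Lam → ℕ
  | var _ => 1
  | app M N => wt M + wt N + 1
  | lam M => wt M + 3

theorem wt_lift (M : Lam) : ∀ k, wt (lift k M) = wt M := by
  induction M with
  | var m => intro k; simp only [lift]; split <;> rfl
  | app M N ihM ihN => intro k; simp [lift, wt, ihM, ihN]
  | lam M ih => intro k; simp [lift, wt, ih]

theorem applyAll_append (l l' : List Lam) : ∀ G,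
    applyAll G (l ++ l') = applyAll (applyAll G l) l' := by
  induction l with
  | nil => intro G; rfl
  | cons M l ih => intro G; exact ih _

theorem nf_spine (M : Lam) (h : IsBetaEtaNormal M) (hl : ∀ M', M ≠ lam M') :
    ∃ i Ms, M = applyAll (var i) Ms ∧ HasFree M i ∧ Ms.length < wt M ∧
      ∀ L ∈ Ms, IsBetaEtaNormal L ∧ wt L < wt M ∧ ∀ n, HasFree L n → HasFree M n := by
  induction M with
  | var m => exact ⟨m, [], rfl, rfl, by simp [wt], by simp⟩
  | lam M _ => exact (hl M rfl).elim
  | app M N ih _ =>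
    obtain ⟨h1, h2, h3⟩ := nf_app.1 h
    obtain ⟨i, Ms, rfl, hi, hlen, hMs⟩ := ih h2 h1
    refine ⟨i, Ms ++ [N], by rw [applyAll_append]; rfl, Or.inl hi, by simp [wt]; omega, ?_⟩
    intro L hL
    rcases List.mem_append.1 hL with hL | hL
    · obtain ⟨a, b, c⟩ := hMs L hL
      exact ⟨a, by simp only [wt]; omega, fun n hn => Or.inl (c n hn)⟩
    · obtain rfl : L = N := by simpa using hL
      exact ⟨h3, by simp only [wt]; omega, fun n hn => Or.inr hn⟩

/-- The environment in which terms get separated. -/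
noncomputable def env (K s : ℕ) : ℕ → A := fun i => alpha ((K + 1) * (s - i))

theorem env_succ (K s : ℕ) : env K (s + 1) = cons (alpha ((K + 1) * (s + 1))) (env K s) := by
  funext i
  cases i with
  | zero => rfl
  | succ i => simp [env]

theorem sub_ne {K a b m p : ℕ} (hm : m < K) (hp : p < K) (ha : 0 < a) (hb : 0 < b)
    (h : a ≠ b ∨ m ≠ p) : (K + 1) * a - m ≠ (K + 1) * b - p := by
  have h1 : K + 1 ≤ (K + 1) * a := Nat.le_mul_of_pos_right _ ha
  have h2 : K + 1 ≤ (K + 1) * b := Nat.le_mul_of_pos_right _ hb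
  rcases lt_trichotomy a b with hab | hab | hab
  · have : (K + 1) * (a + 1) ≤ (K + 1) * b := Nat.mul_le_mul_left _ hab
    rw [Nat.mul_succ] at this
    omega
  · subst hab
    omega
  · have : (K + 1) * (b + 1) ≤ (K + 1) * a := Nat.mul_le_mul_left _ hab
    rw [Nat.mul_succ] at this
    omega

theorem free_lam_bound {M : Lam} {s : ℕ} (h : ∀ n, HasFree (lam M) n → n < s) :
    ∀ n, HasFree M n → n < s + 1 := fun n hn => by
  cases n with
  | zero => omega
  | succ n => have := h n hn; omega

theorem boehm_aux (K : ℕ) : ∀ (w : ℕ) (M N : Lam) (s : ℕ), wt M + wt N ≤ w → w ≤ K →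
    IsBetaEtaNormal M → IsBetaEtaNormal N → M ≠ N → (∀ n, HasFree M n → n < s) →
    (∀ n, HasFree N n → n < s) → Sep (ev M (env K s)) (ev N (env K s)) := by
  intro w
  induction w with
  | zero =>
    intro M N s h
    cases M <;> simp [wt] at h
  | succ w ih =>
    -- a term starting with a lambda against a term that does not
    have mixed : ∀ (M N : Lam) (s : ℕ), wt (lam M) + wt N ≤ w + 1 → w + 1 ≤ K →
        IsBetaEtaNormal (lam M) → IsBetaEtaNormal N → (∀ N', N ≠ lam N') →
        (∀ n, HasFree (lam M) n → n < s) → (∀ n, HasFree N n → n < s) →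
        Sep (ev (lam M) (env K s)) (ev N (env K s)) := by
      intro M N s hw hK hM hN hl fM fN
      apply Sep.of_mul (alpha ((K + 1) * (s + 1)))
      have e : ev N (env K s) * alpha ((K + 1) * (s + 1)) =
          ev (app (lift 0 N) (var 0)) (env K (s + 1)) := by
        rw [ev_app, env_succ, ev_lift, ev_var, cons_zero]
      rw [ev_lam, e, ← env_succ]
      obtain ⟨hM1, hM2⟩ := nf_lam.1 hM
      refine ih _ _ _ ?_ (by omega) hM1 ?_ ?_ (free_lam_bound fM) ?_
      · simp only [wt, wt_lift] at hw ⊢; omega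
      · refine nf_app.2 ⟨?_, nf_lift N 0 hN, by simp [IsBetaEtaNormal]⟩
        cases N with
        | var m => intro M'; simp [lift]
        | app _ _ => intro M'; simp [lift]
        | lam N => exact (hl N rfl).elim
      · intro h
        exact not_free_lift N 0 (hM2 _ h)
      · rintro n (hn | hn)
        · exact free_lift_bound N 0 s fN n hn
        · simp only [HasFree] at hn; omega
    intro M N s hw hK hM hN hne fM fN
    by_cases lM : ∃ M', M = lam M'
    · obtain ⟨M, rfl⟩ := lM
      by_cases lN : ∃ N', N = lam N'
      · obtain ⟨N, rfl⟩ := lN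
        apply Sep.of_mul (alpha ((K + 1) * (s + 1)))
        rw [ev_lam, ev_lam, ← env_succ]
        refine ih _ _ _ ?_ (by omega) (nf_lam.1 hM).1 (nf_lam.1 hN).1 ?_ (free_lam_bound fM)
          (free_lam_bound fN)
        · simp only [wt] at hw; omega
        · rintro rfl; exact hne rfl
      · push Not at lN
        exact mixed M N s hw hK hM hN lN fM fN
    · push Not at lM
      by_cases lN : ∃ N', N = lam N'
      · obtain ⟨N, rfl⟩ := lN
        exact (mixed N M s (by omega) hK hN hM lM fN fM).symm
      · push Not at lN
        obtain ⟨i, Ms, eM, hi, hMl, hMs⟩ := nf_spine M hM lM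
        obtain ⟨j, Ns, eN, hj, hNl, hNs⟩ := nf_spine N hN lN
        have hi' := fM i hi
        have hj' := fN j hj
        have e1 : ev M (env K s) =
            apps (alpha ((K + 1) * (s - i))) (Ms.map fun M => ev M (env K s)) := by
          rw [eM, ev_applyAll, ev_var]; rfl
        have e2 : ev N (env K s) =
            apps (alpha ((K + 1) * (s - j))) (Ns.map fun M => ev M (env K s)) := by
          rw [eN, ev_applyAll, ev_var]; rfl
        have h1 : K + 1 ≤ (K + 1) * (s - i) := Nat.le_mul_of_pos_right _ (by omega)
        have h2 : K + 1 ≤ (K + 1) * (s - j) := Nat.le_mul_of_pos_right _ (by omega)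
        rw [e1, e2]
        by_cases hij : i = j ∧ Ms.length = Ns.length
        · obtain ⟨rfl, hlen⟩ := hij
          have hMN : Ms ≠ Ns := by
            rintro rfl; exact hne (eM.trans eN.symm)
          obtain ⟨k, hk, hk', hkne⟩ : ∃ k, ∃ (hk : k < Ms.length) (hk' : k < Ns.length),
              Ms[k] ≠ Ns[k] := by
            by_contra hcon
            push Not at hcon
            exact hMN (List.ext_getElem hlen fun k a b => hcon k a b)
          obtain ⟨a1, a2, a3⟩ := hMs _ (List.getElem_mem hk)
          obtain ⟨b1, b2, b3⟩ := hNs _ (List.getElem_mem hk')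
          refine sep_of_arg (k := k) _ _ (by simp; omega) (by simp [hlen]) (by simpa using hk) ?_
          simp only [List.getElem_map]
          exact ih _ _ _ (by omega) (by omega) a1 b1 hkne (fun n hn => fM n (a3 n hn))
            (fun n hn => fN n (b3 n hn))
        · refine sep_of_ne _ _ (by simp; omega) (by simp; omega) ?_
          simp only [List.length_map]
          apply sub_ne <;> omega

theorem boehm {M N : Lam} (cM : Closed M) (cN : Closed N) (hM : IsBetaEtaNormal M)
    (hN : IsBetaEtaNormal N) (hne : M ≠ N) : Sep (mk M cM) (mk N cN) := by
  rw [← ev_closed M cM (env (wt M + wt N) 0), ← ev_closed N cN (env (wt M + wt N) 0)]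
  exact boehm_aux _ _ M N 0 le_rfl le_rfl hM hN hne (fun n hn => (cM n hn).elim)
    (fun n hn => (cN n hn).elim)

theorem mk_applyAll (Ms : List Lam) (hMs : ∀ M ∈ Ms, Closed M) (G : Lam) (hG : Closed G) :
    mk (applyAll G Ms) (closed_applyAll Ms hMs G hG) =
      apps (mk G hG) (Ms.pmap mk hMs) := by
  induction Ms generalizing G with
  | nil => rfl
  | cons M Ms ih =>
    simp only [List.pmap_cons, apps_cons, mk_mul]
    exact ih _ _ _

end Boehm

/-- (Barendregt) A numeral system `d` is adequate — it possesses closed λ-terms for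
Successor, Predecessor and Zero Test — iff every total recursive function
`φ : ℕ^p → ℕ` (for every arity `p ≥ 1`) is λ-definable with respect to `d`. -/
theorem statement14 (d : ℕ → Lam)
    (hc : ∀ n, Lam.Closed (d n)) (hn : ∀ n, Lam.IsBetaEtaNormal (d n))
    (hinj : Function.Injective d) :
    ((∃ S, Lam.Closed S ∧ ∀ n, Lam.BetaEq (Lam.app S (d n)) (d (n + 1))) ∧
     (∃ P, Lam.Closed P ∧ ∀ n, Lam.BetaEq (Lam.app P (d (n + 1))) (d n)) ∧
     (∃ Z, Lam.Closed Z ∧ Lam.BetaEq (Lam.app Z (d 0)) Lam.T ∧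
        ∀ n, Lam.BetaEq (Lam.app Z (d (n + 1))) Lam.F)) ↔
    (∀ p : ℕ, 1 ≤ p → ∀ φ : (Fin p → ℕ) → ℕ, Computable φ →
      ∃ Fφ, Lam.Closed Fφ ∧ ∀ ns : Fin p → ℕ,
        Lam.BetaEq (Lam.applyAll Fφ (List.ofFn fun i => d (ns i))) (d (φ ns))) := by
  constructor
  · rintro ⟨⟨S, cS, hS⟩, ⟨P, cP, hP⟩, ⟨Z, cZ, hZ, hZ'⟩⟩ p _ φ hφ
    obtain ⟨G, hG⟩ := Boehm.def_computable (D := fun n => Boehm.mk (d n) (hc n))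
      (s := Boehm.mk S cS) (p := Boehm.mk P cP) (z := Boehm.mk Z cZ)
      (fun n => by rw [Boehm.mk_mul, Boehm.mk_eq]; exact hS n)
      (fun n => by rw [Boehm.mk_mul, Boehm.mk_eq]; exact hP n)
      (by rw [Boehm.mk_mul, Boehm.tt, Boehm.mk_eq]; exact hZ)
      (fun n => by rw [Boehm.mk_mul, Boehm.ff, Boehm.mk_eq]; exact hZ' n) hφ
    refine ⟨Boehm.out G, Boehm.closed_out G, fun ns => ?_⟩
    have hcl : ∀ M ∈ List.ofFn (fun i => d (ns i)), Lam.Closed M := by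
      intro M hM
      obtain ⟨i, rfl⟩ := (List.mem_ofFn' _ _).1 hM
      exact hc _
    refine (Boehm.mk_eq (hM := Boehm.closed_applyAll _ hcl _ (Boehm.closed_out G))
      (hN := hc _)).1 ?_
    rw [Boehm.mk_applyAll _ hcl _ (Boehm.closed_out G), Boehm.mk_out, ← hG ns]
    congr 1
    apply List.ext_getElem
    · simp
    · intro i h1 h2
      simp
  · intro h
    have h1 : ∀ f : ℕ → ℕ, Computable f →
        ∃ G, Lam.Closed G ∧ ∀ n, Lam.BetaEq (Lam.app G (d n)) (d (f n)) := by
      intro f hf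
      obtain ⟨G, cG, hG⟩ := h 1 le_rfl (fun ns => f (ns 0))
        (hf.comp (Computable.fin_app.comp Computable.id (Computable.const 0)))
      exact ⟨G, cG, fun n => by simpa [Lam.applyAll] using hG (fun _ => n)⟩
    refine ⟨h1 _ Computable.succ, ?_, ?_⟩
    · obtain ⟨P, cP, hP⟩ := h1 _ Computable.pred
      exact ⟨P, cP, fun n => hP (n + 1)⟩
    · obtain ⟨C, cC, hC⟩ := h1 (fun n => n - (n - 1))
        (Primrec.nat_sub.comp Primrec.id Primrec.pred).to_comp
      obtain ⟨a, ha, ha'⟩ := Boehm.boehm (hc 0) (hc 1) (hn 0) (hn 1)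
        (fun e => absurd (hinj e) (by omega))
      obtain ⟨Z, hZ⟩ : Boehm.Rep (fun x => a * (Boehm.mk C cC * x)) :=
        Boehm.rep_app (Boehm.rep_const _) (Boehm.rep_app (Boehm.rep_const _) Boehm.rep_id)
      have hZ0 : Z * Boehm.mk (d 0) (hc 0) = Boehm.tt := by
        rw [hZ, ← ha]
        beta_reduce
        congr 1
        rw [Boehm.mk_mul, Boehm.mk_eq]
        exact hC 0
      have hZ1 : ∀ n, Z * Boehm.mk (d (n + 1)) (hc (n + 1)) = Boehm.ff := by
        intro n
        rw [hZ, ← ha']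
        beta_reduce
        congr 1
        rw [Boehm.mk_mul, Boehm.mk_eq]
        simpa using hC (n + 1)
      refine ⟨Boehm.out Z, Boehm.closed_out Z, ?_, fun n => ?_⟩
      · rw [← Boehm.mk_out Z, Boehm.mk_mul, Boehm.tt, Boehm.mk_eq] at hZ0
        exact hZ0
      · have := hZ1 n
        rw [← Boehm.mk_out Z, Boehm.mk_mul, Boehm.ff, Boehm.mk_eq] at this
        exact this
end

section
/- Let k : ℕ × ℕ → ℕ be defined by k(n, m) = n + 1 if m = 0 and k(n, m) = |n − m| (the absolute difference) if m ≠ 0. Then k is a total recursive (computable) function, and for every numeral system d, k is λ-definable with respect to d if and only if every total recursive function ℕ^p → ℕ is λ-definable with respect to d. -/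
/-- The binary function `k` : `k n m = n + 1` if `m = 0` and `k n m = |n - m|`
(the absolute difference) otherwise. -/
def kFun (n m : ℕ) : ℕ := if m = 0 then n + 1 else Nat.dist n m


namespace LamQ
open Lam

/-! ### Closed terms -/

def CloseAt (k : ℕ) (M : Lam) : Prop := ∀ n, HasFree M n → n < k

theorem closeAt_zero {M : Lam} : CloseAt 0 M ↔ Closed M := by
  simp [CloseAt, Closed]

theorem CloseAt.app {k : ℕ} {M N : Lam} :
    CloseAt k (Lam.app M N) ↔ CloseAt k M ∧ CloseAt k N := by
  simp only [CloseAt, HasFree]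
  constructor
  · intro h
    exact ⟨fun n hn => h n (Or.inl hn), fun n hn => h n (Or.inr hn)⟩
  · rintro ⟨h1, h2⟩ n (hn | hn)
    · exact h1 n hn
    · exact h2 n hn

theorem CloseAt.lam {k : ℕ} {M : Lam} : CloseAt k (Lam.lam M) ↔ CloseAt (k + 1) M := by
  simp only [CloseAt, HasFree]
  constructor
  · intro h n hn
    cases n with
    | zero => omega
    | succ n => have := h n hn; omega
  · intro h n hn
    have := h _ hn
    omega

theorem CloseAt.var {k n : ℕ} : CloseAt k (Lam.var n) ↔ n < k := by
  simp [CloseAt, HasFree]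

theorem CloseAt.lift_eq {M : Lam} : ∀ {k d : ℕ}, CloseAt k M → k ≤ d → Lam.lift d M = M := by
  induction M with
  | var n =>
    intro k d h hd
    rw [CloseAt.var] at h
    simp [Lam.lift]; omega
  | app M N ih1 ih2 =>
    intro k d h hd
    rw [CloseAt.app] at h
    simp [Lam.lift, ih1 h.1 hd, ih2 h.2 hd]
  | lam M ih =>
    intro k d h hd
    rw [CloseAt.lam] at h
    simp [Lam.lift, ih h (Nat.succ_le_succ hd)]

theorem CloseAt.subst_eq {M : Lam} :
    ∀ {k d : ℕ} {N : Lam}, CloseAt k M → k ≤ d → Lam.subst M d N = M := by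
  induction M with
  | var n =>
    intro k d N h hd
    rw [CloseAt.var] at h
    have h1 : n ≠ d := by omega
    have h2 : ¬ d < n := by omega
    simp [Lam.subst, h1, h2]
  | app M N ih1 ih2 =>
    intro k d N h hd
    rw [CloseAt.app] at h
    simp [Lam.subst, ih1 h.1 hd, ih2 h.2 hd]
  | lam M ih =>
    intro k d N h hd
    rw [CloseAt.lam] at h
    simp [Lam.subst, ih h (Nat.succ_le_succ hd)]

theorem closed_lift {M : Lam} (h : Closed M) (d : ℕ) : Lam.lift d M = M :=
  (closeAt_zero.2 h).lift_eq (Nat.zero_le d)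

theorem closed_subst {M : Lam} (h : Closed M) (d : ℕ) (N : Lam) : Lam.subst M d N = M :=
  (closeAt_zero.2 h).subst_eq (Nat.zero_le d)

theorem closed_app {M N : Lam} (h1 : Closed M) (h2 : Closed N) : Closed (Lam.app M N) :=
  closeAt_zero.1 (CloseAt.app.2 ⟨closeAt_zero.2 h1, closeAt_zero.2 h2⟩)

/-! ### β-equivalence -/

theorem _root_.Lam.BetaEq.refl (M : Lam) : BetaEq M M := Relation.EqvGen.refl M
theorem _root_.Lam.BetaEq.symm {M N : Lam} (h : BetaEq M N) : BetaEq N M := Relation.EqvGen.symm _ _ h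
theorem _root_.Lam.BetaEq.trans {M N P : Lam} (h : BetaEq M N) (h' : BetaEq N P) : BetaEq M P :=
  Relation.EqvGen.trans _ _ _ h h'

theorem _root_.Lam.BetaEq.appL {M M' : Lam} (N : Lam) (h : BetaEq M M') :
    BetaEq (Lam.app M N) (Lam.app M' N) := by
  induction h with
  | rel _ _ h => exact Relation.EqvGen.rel _ _ (Step.appL N h)
  | refl _ => exact BetaEq.refl _
  | symm _ _ _ ih => exact BetaEq.symm ih
  | trans _ _ _ _ _ ih1 ih2 => exact BetaEq.trans ih1 ih2

theorem _root_.Lam.BetaEq.appR {M M' : Lam} (N : Lam) (h : BetaEq M M') :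
    BetaEq (Lam.app N M) (Lam.app N M') := by
  induction h with
  | rel _ _ h => exact Relation.EqvGen.rel _ _ (Step.appR N h)
  | refl _ => exact BetaEq.refl _
  | symm _ _ _ ih => exact BetaEq.symm ih
  | trans _ _ _ _ _ ih1 ih2 => exact BetaEq.trans ih1 ih2

theorem _root_.Lam.BetaEq.app {M M' N N' : Lam} (h : BetaEq M M') (h' : BetaEq N N') :
    BetaEq (Lam.app M N) (Lam.app M' N') :=
  (BetaEq.appL N h).trans (BetaEq.appR M' h')

theorem _root_.Lam.BetaEq.beta (M N : Lam) : BetaEq (Lam.app (Lam.lam M) N) (Lam.subst M 0 N) :=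
  Relation.EqvGen.rel _ _ (Step.beta M N)

/-! ### The combinatory algebra of closed terms modulo β -/

instance closedSetoid : Setoid {M : Lam // Closed M} where
  r a b := BetaEq a.1 b.1
  iseqv := ⟨fun a => BetaEq.refl a.1, fun h => BetaEq.symm h, fun h h' => BetaEq.trans h h'⟩

def Q : Type := Quotient closedSetoid

def mk (M : Lam) (h : Closed M) : Q := Quotient.mk closedSetoid ⟨M, h⟩

def ap : Q → Q → Q :=
  Quotient.map₂ (fun a b => ⟨Lam.app a.1 b.1, closed_app a.2 b.2⟩)
    (fun _ _ h _ _ hx => BetaEq.app h hx)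

infixl:75 "⋄" => ap

theorem mk_app {M N : Lam} (h : Closed (Lam.app M N)) (hM : Closed M) (hN : Closed N) :
    mk (Lam.app M N) h = mk M hM ⋄ mk N hN := rfl

theorem mk_eq {M N : Lam} (hM : Closed M) (hN : Closed N) :
    mk M hM = mk N hN ↔ BetaEq M N :=
  ⟨fun h => Quotient.exact h, fun h => Quotient.sound h⟩

theorem exists_rep (q : Q) : ∃ M, ∃ h : Closed M, mk M h = q := by
  induction q using Quotient.inductionOn with
  | _ a => exact ⟨a.1, a.2, rfl⟩

theorem closed_K : Closed (Lam.lam (Lam.lam (Lam.var 1))) := by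
  rw [← closeAt_zero]; simp [CloseAt.lam, CloseAt.var]

theorem closed_S : Closed (Lam.lam (Lam.lam (Lam.lam (Lam.app (Lam.app (Lam.var 2) (Lam.var 0))
    (Lam.app (Lam.var 1) (Lam.var 0)))))) := by
  rw [← closeAt_zero]; simp [CloseAt.lam, CloseAt.var, CloseAt.app]

def K : Q := mk _ closed_K
def S : Q := mk _ closed_S

@[simp] theorem K_eq (a b : Q) : K ⋄ a ⋄ b = a := by
  obtain ⟨a, ha, rfl⟩ := exists_rep a
  obtain ⟨b, hb, rfl⟩ := exists_rep b
  refine (mk_eq (closed_app (closed_app closed_K ha) hb) ha).2 ?_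
  have h1 := (BetaEq.beta (Lam.lam (Lam.var 1)) a).appL b
  simp only [Lam.subst, closed_lift ha] at h1
  have h2 := BetaEq.beta a b
  rw [closed_subst ha] at h2
  exact h1.trans h2

@[simp] theorem S_eq (a b c : Q) : S ⋄ a ⋄ b ⋄ c = a ⋄ c ⋄ (b ⋄ c) := by
  obtain ⟨a, ha, rfl⟩ := exists_rep a
  obtain ⟨b, hb, rfl⟩ := exists_rep b
  obtain ⟨c, hc, rfl⟩ := exists_rep c
  refine (mk_eq (closed_app (closed_app (closed_app closed_S ha) hb) hc)
    (closed_app (closed_app ha hc) (closed_app hb hc))).2 ?_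
  have h1 := ((BetaEq.beta (Lam.lam (Lam.lam (Lam.app (Lam.app (Lam.var 2) (Lam.var 0))
    (Lam.app (Lam.var 1) (Lam.var 0))))) a).appL b).appL c
  simp [Lam.subst, closed_lift ha] at h1
  have h2 := (BetaEq.beta (Lam.lam (Lam.app (Lam.app a (Lam.var 0))
    (Lam.app (Lam.var 1) (Lam.var 0)))) b).appL c
  simp [Lam.subst, closed_lift hb, closed_subst ha] at h2
  have h3 := BetaEq.beta (Lam.app (Lam.app a (Lam.var 0)) (Lam.app b (Lam.var 0))) c
  simp [Lam.subst, closed_subst hb, closed_subst ha] at h3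
  exact (h1.trans h2).trans h3

/-! ### Combinatory completeness -/

inductive CPoly : Type
  | vr : ℕ → CPoly
  | ct : Q → CPoly
  | nd : CPoly → CPoly → CPoly

namespace CPoly

def eval : List Q → CPoly → Q
  | e, vr n => e.getD n K
  | _, ct q => q
  | e, nd p q => eval e p ⋄ eval e q

def abs : CPoly → CPoly
  | vr 0 => nd (nd (ct S) (ct K)) (ct K)
  | vr (n + 1) => nd (ct K) (vr n)
  | ct q => ct (K ⋄ q)
  | nd p q => nd (nd (ct S) (abs p)) (abs q)

@[simp] theorem eval_abs (e : List Q) (p : CPoly) (x : Q) :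
    eval e (abs p) ⋄ x = eval (x :: e) p := by
  induction p with
  | vr n => cases n <;> simp [abs, eval]
  | ct q => simp [abs, eval]
  | nd p q ih1 ih2 => simp [abs, eval, ih1, ih2]

end CPoly

open CPoly

infixl:75 "⋆" => CPoly.nd

/-- Identity. -/
def Id : Q := eval [] (abs (vr 0))
@[simp] theorem Id_eq (x : Q) : Id ⋄ x = x := by simp [Id, eval]

def Pr : Q := eval [] (abs (abs (abs (vr 0 ⋆ vr 2 ⋆ vr 1))))
@[simp] theorem Pr_eq (x y f : Q) : Pr ⋄ x ⋄ y ⋄ f = f ⋄ x ⋄ y := by simp [Pr, eval]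

/-- Fixed points. -/
def fixw (f : Q) : Q := eval [] (abs (ct f ⋆ (vr 0 ⋆ vr 0)))
def fix (f : Q) : Q := fixw f ⋄ fixw f
theorem fix_eq (f : Q) : fix f = f ⋄ fix f := by
  have h : ∀ x, fixw f ⋄ x = f ⋄ (x ⋄ x) := fun x => by simp [fixw, eval]
  exact h _

/-- Iterated application. -/
def fold (x : Q) (l : List Q) : Q := l.foldl ap x

@[simp] theorem fold_nil (x : Q) : fold x [] = x := rfl
@[simp] theorem fold_cons (x a : Q) (l : List Q) : fold x (a :: l) = fold (x ⋄ a) l := rfl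
@[simp] theorem fold_append (x : Q) (l l' : List Q) : fold x (l ++ l') = fold (fold x l) l' := by
  simp [fold]

theorem exists_fold (us : List Q) : ∃ g : Q, ∀ x, g ⋄ x = fold x us := by
  induction us using List.reverseRecOn with
  | nil => exact ⟨Id, by simp⟩
  | append_singleton us u ih =>
    obtain ⟨g, hg⟩ := ih
    exact ⟨eval [] (abs (ct g ⋆ vr 0 ⋆ ct u)), by simp [eval, hg]⟩

/-- Swallow `n` arguments and return `a`. -/
def E : ℕ → Q → Q
  | 0, a => a
  | n + 1, a => K ⋄ E n a

theorem fold_E (a : Q) (l : List Q) : fold (E l.length a) l = a := by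
  induction l with
  | nil => rfl
  | cons x l ih => simp [E, ih]

theorem fold_E' (a : Q) (l : List Q) (n : ℕ) (h : l.length = n) : fold (E n a) l = a := by
  subst h; exact fold_E a l

/-- `U n x` swallows `n` arguments and returns `x`. -/
def U : ℕ → Q
  | 0 => Id
  | n + 1 => eval [] (abs (abs (ct (U n) ⋆ vr 1)))

theorem fold_U (x : Q) (l : List Q) : fold (U l.length ⋄ x) l = x := by
  induction l with
  | nil => simp [U]
  | cons y l ih => simp [U, eval, ih]

theorem fold_sel (x : Q) (l l' : List Q) :
    fold (E l.length (U l'.length)) (l ++ x :: l') = x := by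
  rw [fold_append, fold_E, fold_cons, fold_U]

/-- Auxiliary for Böhm's applicators. -/
def P : ℕ → Q
  | 0 => Id
  | n + 1 => eval [] (abs (abs (ct (P n) ⋆ (ct (eval [] (abs (abs (abs (vr 2 ⋆ vr 0 ⋆ vr 1)))))
      ⋆ vr 1 ⋆ vr 0))))

theorem fold_P (l : List Q) : ∀ h x : Q, fold (P l.length ⋄ h) l ⋄ x = fold (h ⋄ x) l := by
  induction l with
  | nil => intro h x; simp [P]
  | cons y l ih => intro h x; simp [P, eval, ih]

def Bo (n : ℕ) : Q := P n ⋄ Id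

theorem fold_Bo (l : List Q) (n : ℕ) (h : l.length = n) (x : Q) :
    fold (Bo n) l ⋄ x = fold x l := by
  subst h; simp [Bo, fold_P]

/-- Separation of two neutral terms with different residual arities. -/
theorem sep_lt (l l' : List Q) (n m : ℕ) (hl : l.length ≤ n) (hl' : l'.length ≤ m)
    (hlt : n - l.length < m - l'.length) (a b : Q) :
    ∃ us, fold (fold (Bo n) l) us = a ∧ fold (fold (Bo m) l') us = b := by
  obtain ⟨e, he⟩ : ∃ e, m - l'.length = (n - l.length) + e + 1 :=
    ⟨m - l'.length - (n - l.length) - 1, by omega⟩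
  let r := List.replicate (n - l.length) Id
  let r' := List.replicate e Id
  let z := E (n + (e + 1)) a
  refine ⟨r ++ (z :: (r' ++ [E m b])), ?_, ?_⟩
  · rw [fold_append, ← fold_append (Bo n), fold_cons, fold_Bo (l ++ r) n, ← fold_append]
    · apply fold_E'
      simp [r, r']; omega
    · simp [r]; omega
  · have : fold (fold (Bo m) l') (r ++ z :: (r' ++ [E m b]))
        = fold (Bo m) (l' ++ r ++ z :: r') ⋄ E m b := by simp
    rw [this, fold_Bo]
    · apply fold_E'
      simp [r, r']; omega
    · simp [r, r']; omega

theorem sep_ne (l l' : List Q) (n m : ℕ) (hl : l.length ≤ n) (hl' : l'.length ≤ m)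
    (hne : n - l.length ≠ m - l'.length) (a b : Q) :
    ∃ us, fold (fold (Bo n) l) us = a ∧ fold (fold (Bo m) l') us = b := by
  rcases lt_or_gt_of_ne hne with h | h
  · exact sep_lt l l' n m hl hl' h a b
  · obtain ⟨us, h1, h2⟩ := sep_lt l' l m n hl' hl h b a
    exact ⟨us, h2, h1⟩

/-- Extraction of an argument. -/
theorem sel_args (n r s : ℕ) (hn : r + 1 + s ≤ n) :
    ∃ us, ∀ (l1 l2 : List Q) (x : Q), l1.length = r → l2.length = s →
      fold (fold (Bo n) (l1 ++ x :: l2)) us = x := by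
  let q := List.replicate (n - (r + 1 + s)) Id
  refine ⟨q ++ [E r (U (n - (r + 1)))], ?_⟩
  intro l1 l2 x h1 h2
  rw [fold_append, ← fold_append (Bo n), fold_cons, fold_nil, fold_Bo]
  · have := fold_sel x l1 (l2 ++ q)
    have hlen : (l2 ++ q).length = n - (r + 1) := by simp [q]; omega
    rw [hlen, h1] at this
    simpa using this
  · simp [q]; omega

/-! ### Instantiation by closed terms -/

def inst (σ : ℕ → Lam) : ℕ → Lam → Lam
  | k, Lam.var n => if n < k then Lam.var n else σ (n - k)
  | k, Lam.app M N => Lam.app (inst σ k M) (inst σ k N)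
  | k, Lam.lam M => Lam.lam (inst σ (k + 1) M)

def cons (N : Lam) (σ : ℕ → Lam) : ℕ → Lam
  | 0 => N
  | n + 1 => σ n

theorem inst_closeAt {σ : ℕ → Lam} (hσ : ∀ n, Closed (σ n)) (M : Lam) :
    ∀ k, CloseAt k (inst σ k M) := by
  induction M with
  | var n =>
    intro k
    simp only [inst]
    split_ifs with h
    · exact CloseAt.var.2 h
    · intro m hm
      exact absurd hm (hσ _ m)
  | app M N ih1 ih2 => intro k; exact CloseAt.app.2 ⟨ih1 k, ih2 k⟩
  | lam M ih => intro k; exact CloseAt.lam.2 (ih (k + 1))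

theorem inst_closed {σ : ℕ → Lam} (hσ : ∀ n, Closed (σ n)) (M : Lam) : Closed (inst σ 0 M) :=
  closeAt_zero.1 (inst_closeAt hσ M 0)

theorem inst_of_closeAt (σ : ℕ → Lam) (M : Lam) : ∀ k, CloseAt k M → inst σ k M = M := by
  induction M with
  | var n => intro k h; rw [CloseAt.var] at h; simp [inst, h]
  | app M N ih1 ih2 => intro k h; rw [CloseAt.app] at h; simp [inst, ih1 k h.1, ih2 k h.2]
  | lam M ih => intro k h; rw [CloseAt.lam] at h; simp [inst, ih _ h]

theorem subst_inst {σ : ℕ → Lam} (hσ : ∀ n, Closed (σ n)) {N : Lam} (hN : Closed N) (M : Lam) :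
    ∀ k, Lam.subst (inst σ (k + 1) M) k N = inst (cons N σ) k M := by
  induction M with
  | var n =>
    intro k
    rcases lt_trichotomy n k with h | h | h
    · have h1 : n < k + 1 := by omega
      have h2 : n ≠ k := by omega
      have h3 : ¬ k < n := by omega
      simp [inst, h, h1, h2, h3, Lam.subst]
    · subst h
      simp [inst, Lam.subst, cons]
    · have h1 : ¬ n < k + 1 := by omega
      have h2 : ¬ n < k := by omega
      obtain ⟨e, rfl⟩ : ∃ e, n = k + 1 + e := ⟨n - (k + 1), by omega⟩
      have h3 : k + 1 + e - k = e + 1 := by omega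
      simp only [inst, h1, h2, if_false, h3, cons]
      rw [closed_subst (hσ _)]
      congr 1; omega
  | app M P ih1 ih2 => intro k; simp [inst, Lam.subst, ih1, ih2]
  | lam M ih => intro k; simp [inst, Lam.subst, closed_lift hN, ih]

theorem inst_lift (σ : ℕ → Lam) (N : Lam) (M : Lam) :
    ∀ k, inst (cons N σ) k (Lam.lift k M) = inst σ k M := by
  induction M with
  | var n =>
    intro k
    by_cases h : n < k
    · simp [Lam.lift, inst, h]
    · have h1 : ¬ n + 1 < k := by omega
      have h2 : n + 1 - k = (n - k) + 1 := by omega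
      simp [Lam.lift, inst, h, h1, h2, cons]
  | app M P ih1 ih2 => intro k; simp [inst, Lam.lift, ih1, ih2]
  | lam M ih => intro k; simp [inst, Lam.lift, ih]

theorem inst_applyAll (σ : ℕ → Lam) (k : ℕ) (ts : List Lam) :
    ∀ h, inst σ k (Lam.applyAll h ts) = Lam.applyAll (inst σ k h) (ts.map (inst σ k)) := by
  induction ts with
  | nil => intro h; rfl
  | cons t ts ih => intro h; simp [Lam.applyAll, ih, inst]

/-! ### Normal forms -/

theorem normal_app {M N : Lam} : IsBetaEtaNormal (Lam.app M N) ↔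
    (∀ P, M ≠ Lam.lam P) ∧ IsBetaEtaNormal M ∧ IsBetaEtaNormal N := by
  cases M <;> simp [IsBetaEtaNormal]

theorem normal_lam {M : Lam} : IsBetaEtaNormal (Lam.lam M) ↔
    IsBetaEtaNormal M ∧ ∀ N, M = Lam.app N (Lam.var 0) → HasFree N 0 := by
  rcases M with n | ⟨N, P⟩ | P
  · simp [IsBetaEtaNormal]
  · rcases P with n | ⟨P, R⟩ | P
    · rcases n with _ | n
      · simp [IsBetaEtaNormal, and_comm]
      · simp [IsBetaEtaNormal]
    · simp [IsBetaEtaNormal]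
    · simp [IsBetaEtaNormal]
  · simp [IsBetaEtaNormal]

def size : Lam → ℕ
  | Lam.var _ => 1
  | Lam.app M N => size M + size N
  | Lam.lam M => size M + 2

theorem size_pos (M : Lam) : 1 ≤ size M := by
  induction M with
  | var n => simp [size]
  | app M N ih1 ih2 => simp [size]; omega
  | lam M ih => simp [size]

theorem size_lift (M : Lam) : ∀ d, size (Lam.lift d M) = size M := by
  induction M with
  | var n => intro d; simp only [Lam.lift]; split_ifs <;> rfl
  | app M N ih1 ih2 => intro d; simp [Lam.lift, size, ih1, ih2]
  | lam M ih => intro d; simp [Lam.lift, size, ih]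

theorem hasFree_lift_lt (M : Lam) : ∀ d n, n < d → (HasFree (Lam.lift d M) n ↔ HasFree M n) := by
  induction M with
  | var m =>
    intro d n h
    simp only [Lam.lift]
    split_ifs with h1
    · rfl
    · simp only [HasFree]; omega
  | app M N ih1 ih2 => intro d n h; simp [Lam.lift, HasFree, ih1 d n h, ih2 d n h]
  | lam M ih => intro d n h; simp [Lam.lift, HasFree, ih (d + 1) (n + 1) (by omega)]

theorem not_hasFree_lift (M : Lam) : ∀ d, ¬ HasFree (Lam.lift d M) d := by
  induction M with
  | var m =>
    intro d
    simp only [Lam.lift]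
    split_ifs with h1 <;> simp only [HasFree] <;> omega
  | app M N ih1 ih2 => intro d; simp [Lam.lift, HasFree, ih1 d, ih2 d]
  | lam M ih => intro d; simp [Lam.lift, HasFree, ih (d + 1)]

theorem lift_ne_lam {M : Lam} (h : ∀ P, M ≠ Lam.lam P) (d : ℕ) :
    ∀ P, Lam.lift d M ≠ Lam.lam P := by
  intro P
  cases M with
  | var n => simp only [Lam.lift]; split_ifs <;> simp
  | app M N => simp [Lam.lift]
  | lam M => exact absurd rfl (h M)

theorem normal_lift (M : Lam) : ∀ d, IsBetaEtaNormal M → IsBetaEtaNormal (Lam.lift d M) := by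
  induction M with
  | var n => intro d _; simp only [Lam.lift]; split_ifs <;> simp [IsBetaEtaNormal]
  | app M N ih1 ih2 =>
    intro d h
    rw [normal_app] at h
    rw [Lam.lift, normal_app]
    exact ⟨lift_ne_lam h.1 d, ih1 d h.2.1, ih2 d h.2.2⟩
  | lam M ih =>
    intro d h
    rw [normal_lam] at h
    rw [Lam.lift, normal_lam]
    refine ⟨ih _ h.1, ?_⟩
    intro N hN
    rcases M with n | ⟨P, R⟩ | P
    · simp only [Lam.lift] at hN
      split_ifs at hN
    · simp only [Lam.lift, Lam.app.injEq] at hN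
      obtain ⟨rfl, hR⟩ := hN
      rw [hasFree_lift_lt P (d + 1) 0 (by omega)]
      apply h.2
      congr 1
      rcases R with n | ⟨R, R'⟩ | R
      · simp only [Lam.lift] at hR
        split_ifs at hR
        · exact hR
        · simp at hR
      · simp [Lam.lift] at hR
      · simp [Lam.lift] at hR
    · simp [Lam.lift] at hN

theorem applyAll_append (ts : List Lam) (t : Lam) :
    ∀ h, Lam.applyAll h (ts ++ [t]) = Lam.app (Lam.applyAll h ts) t := by
  induction ts with
  | nil => intro h; rfl
  | cons s ts ih => intro h; simp [Lam.applyAll, ih]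

theorem neutral_view (M : Lam) : IsBetaEtaNormal M → (∀ P, M ≠ Lam.lam P) →
    ∃ i ts, M = Lam.applyAll (Lam.var i) ts ∧ ∀ t ∈ ts, IsBetaEtaNormal t := by
  induction M with
  | var n => intro _ _; exact ⟨n, [], rfl, by simp⟩
  | app M N ih1 _ =>
    intro h _
    rw [normal_app] at h
    obtain ⟨i, ts, rfl, hts⟩ := ih1 h.2.1 h.1
    refine ⟨i, ts ++ [N], (applyAll_append ts N _).symm, ?_⟩
    intro t ht
    rcases List.mem_append.1 ht with ht | ht
    · exact hts t ht
    · rw [List.mem_singleton.1 ht]; exact h.2.2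
  | lam M _ => intro _ h; exact absurd rfl (h M)

theorem size_applyAll (ts : List Lam) :
    ∀ h, size (Lam.applyAll h ts) = size h + (ts.map size).sum := by
  induction ts with
  | nil => intro h; simp [Lam.applyAll]
  | cons t ts ih => intro h; simp [Lam.applyAll, ih, size]; omega

theorem length_le_size (ts : List Lam) : ts.length ≤ (ts.map size).sum := by
  induction ts with
  | nil => simp
  | cons t ts ih => have := size_pos t; simp; omega

theorem list_split {α : Type} (l : List α) : ∀ l' : List α, l.length = l'.length → l ≠ l' →
    ∃ l1 x l2 l1' x' l2', l = l1 ++ x :: l2 ∧ l' = l1' ++ x' :: l2' ∧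
      l1.length = l1'.length ∧ l2.length = l2'.length ∧ x ≠ x' := by
  induction l with
  | nil => intro l' h h'; cases l' <;> simp_all
  | cons a l ih =>
    intro l' h h'
    cases l' with
    | nil => simp at h
    | cons b l' =>
      by_cases hab : a = b
      · subst hab
        obtain ⟨l1, x, l2, l1', x', l2', rfl, rfl, h1, h2, h3⟩ :=
          ih l' (by simpa using h) (by intro e; exact h' (by rw [e]))
        exact ⟨a :: l1, x, l2, a :: l1', x', l2', rfl, rfl, by simp [h1], h2, h3⟩
      · exact ⟨[], a, l, [], b, l', rfl, rfl, rfl, by simpa using h, hab⟩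

/-! ### Böhm's theorem -/

noncomputable def rep (q : Q) : Lam := (exists_rep q).choose
theorem rep_closed (q : Q) : Closed (rep q) := (exists_rep q).choose_spec.choose
theorem mk_rep (q : Q) (h : Closed (rep q)) : mk (rep q) h = q :=
  (exists_rep q).choose_spec.choose_spec

/-- Colours of the variables at depth `k`. -/
def col (k v : ℕ) : ℕ := if v < k then 2 * (k - v) + 1 else 2 * (v - k) + 2

theorem col_inj (k : ℕ) {v w : ℕ} (h : col k v = col k w) : v = w := by
  simp only [col] at h
  split_ifs at h <;> omega

theorem col_pos (k v : ℕ) : 1 ≤ col k v := by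
  simp only [col]; split_ifs <;> omega

noncomputable def env (L k : ℕ) (v : ℕ) : Lam := rep (Bo (L * col k v))

theorem env_closed (L k v : ℕ) : Closed (env L k v) := rep_closed _

theorem env_cons (L k : ℕ) : cons (env L (k + 1) 0) (env L k) = env L (k + 1) := by
  funext v
  cases v with
  | zero => rfl
  | succ v =>
    have : col k v = col (k + 1) (v + 1) := by
      simp only [col]
      split_ifs <;> omega
    simp [cons, env, this]

noncomputable def ev (L k : ℕ) (t : Lam) : Q := mk (inst (env L k) 0 t) (inst_closed (env_closed L k) t)

theorem ev_app (L k : ℕ) (M N : Lam) : ev L k (Lam.app M N) = ev L k M ⋄ ev L k N := rfl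

theorem ev_var (L k v : ℕ) : ev L k (Lam.var v) = Bo (L * col k v) := by
  have : ∀ M (hM : Closed M), M = rep (Bo (L * col k v)) → mk M hM = Bo (L * col k v) := by
    rintro M hM rfl
    exact mk_rep _ _
  exact this _ _ (by simp [inst, env])

theorem ev_applyAll (L k : ℕ) (ts : List Lam) :
    ∀ h, ev L k (Lam.applyAll h ts) = fold (ev L k h) (ts.map (ev L k)) := by
  induction ts with
  | nil => intro h; rfl
  | cons t ts ih => intro h; simp [Lam.applyAll, ih, ev_app]

theorem ev_lam (L k : ℕ) (M : Lam) :
    ev L k (Lam.lam M) ⋄ ev L (k + 1) (Lam.var 0) = ev L (k + 1) M := by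
  refine (mk_eq (closed_app (inst_closed (env_closed L k) _) (inst_closed (env_closed L _) _))
    (inst_closed (env_closed L _) _)).2 ?_
  have h := BetaEq.beta (inst (env L k) 1 M) (env L (k + 1) 0)
  rw [subst_inst (env_closed L k) (env_closed L _ _) M 0, env_cons] at h
  simpa [inst] using h

theorem ev_lift (L k : ℕ) (M : Lam) : ev L (k + 1) (Lam.lift 0 M) = ev L k M := by
  have h : inst (env L (k + 1)) 0 (Lam.lift 0 M) = inst (env L k) 0 M := by
    rw [← env_cons, inst_lift]
  simp only [ev, h]

theorem sep_cons {x x' u a b : Q} (h : ∃ us, fold (x ⋄ u) us = a ∧ fold (x' ⋄ u) us = b) :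
    ∃ us, fold x us = a ∧ fold x' us = b := by
  obtain ⟨us, h1, h2⟩ := h
  exact ⟨u :: us, h1, h2⟩

theorem eta_ne {u t' : Lam} (h : IsBetaEtaNormal (Lam.lam u)) :
    u ≠ Lam.app (Lam.lift 0 t') (Lam.var 0) := fun e =>
  not_hasFree_lift t' 0 ((normal_lam.1 h).2 _ e)

theorem eta_normal {t' : Lam} (h : IsBetaEtaNormal t') (hl : ∀ P, t' ≠ Lam.lam P) :
    IsBetaEtaNormal (Lam.app (Lam.lift 0 t') (Lam.var 0)) :=
  normal_app.2 ⟨lift_ne_lam hl 0, normal_lift _ _ h, by simp [IsBetaEtaNormal]⟩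

theorem bohm_aux (L : ℕ) : ∀ s, s ≤ L → ∀ t t' : Lam, size t + size t' = s →
    IsBetaEtaNormal t → IsBetaEtaNormal t' → t ≠ t' → ∀ (k : ℕ) (a b : Q),
    ∃ us, fold (ev L k t) us = a ∧ fold (ev L k t') us = b := by
  intro s
  induction s using Nat.strong_induction_on with
  | _ s ih =>
  intro hs t t' hsz ht ht' hne k a b
  by_cases hlt : ∃ u, t = Lam.lam u
  · obtain ⟨u, rfl⟩ := hlt
    apply sep_cons (u := ev L (k + 1) (Lam.var 0))
    rw [ev_lam]
    by_cases hlt' : ∃ u', t' = Lam.lam u'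
    · obtain ⟨u', rfl⟩ := hlt'
      rw [ev_lam]
      simp only [size] at hsz
      exact ih (size u + size u') (by omega) (by omega) u u' rfl (normal_lam.1 ht).1
        (normal_lam.1 ht').1 (fun e => hne (by rw [e])) _ a b
    · have hl : ∀ P, t' ≠ Lam.lam P := fun P hP => hlt' ⟨P, hP⟩
      rw [← ev_lift L k t', ← ev_app]
      simp only [size] at hsz
      have h1 : size (Lam.app (Lam.lift 0 t') (Lam.var 0)) = size t' + 1 := by
        simp [size, size_lift]
      exact ih _ (by omega) (by omega) u _ rfl (normal_lam.1 ht).1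
        (eta_normal ht' hl) (eta_ne ht) _ a b
  · have hl : ∀ P, t ≠ Lam.lam P := fun P hP => hlt ⟨P, hP⟩
    by_cases hlt' : ∃ u', t' = Lam.lam u'
    · obtain ⟨u', rfl⟩ := hlt'
      apply sep_cons (u := ev L (k + 1) (Lam.var 0))
      rw [ev_lam, ← ev_lift L k t, ← ev_app]
      simp only [size] at hsz
      have h1 : size (Lam.app (Lam.lift 0 t) (Lam.var 0)) = size t + 1 := by
        simp [size, size_lift]
      exact ih _ (by omega) (by omega) _ u' rfl (eta_normal ht hl) (normal_lam.1 ht').1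
        (eta_ne ht').symm _ a b
    · have hl' : ∀ P, t' ≠ Lam.lam P := fun P hP => hlt' ⟨P, hP⟩
      obtain ⟨i, ts, rfl, hts⟩ := neutral_view t ht hl
      obtain ⟨j, ts', rfl, hts'⟩ := neutral_view t' ht' hl'
      simp only [size_applyAll, size] at hsz
      have hlen := length_le_size ts
      have hlen' := length_le_size ts'
      have hi : L ≤ L * col k i := Nat.le_mul_of_pos_right L (col_pos k i)
      have hj : L ≤ L * col k j := Nat.le_mul_of_pos_right L (col_pos k j)
      rw [ev_applyAll, ev_applyAll, ev_var, ev_var]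
      by_cases hres : L * col k i - ts.length = L * col k j - ts'.length
      · have hij : i = j := by
          apply col_inj k
          rcases lt_trichotomy (col k i) (col k j) with h | h | h
          · have := Nat.mul_le_mul_left L (Nat.succ_le_of_lt h)
            rw [Nat.mul_succ] at this
            omega
          · exact h
          · have := Nat.mul_le_mul_left L (Nat.succ_le_of_lt h)
            rw [Nat.mul_succ] at this
            omega
        subst hij
        have hll : ts.length = ts'.length := by omega
        obtain ⟨l1, x, l2, l1', x', l2', rfl, rfl, h1, h2, h3⟩ :=
          list_split ts ts' hll (fun e => hne (by rw [e]))
        simp only [List.length_append, List.length_cons] at hlen hlen'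
        simp only [List.map_append, List.map_cons, List.sum_append, List.sum_cons] at hsz hlen hlen'
        obtain ⟨us, hus⟩ := sel_args (L * col k i) l1.length l2.length (by omega)
        obtain ⟨ws, hw1, hw2⟩ := ih (size x + size x') (by omega) (by omega) x x' rfl
          (hts x (by simp)) (hts' x' (by simp)) h3 k a b
        refine ⟨us ++ ws, ?_, ?_⟩
        · rw [fold_append, List.map_append, List.map_cons, hus _ _ _ (by simp) (by simp), hw1]
        · rw [fold_append, List.map_append, List.map_cons,
            hus _ _ _ (by simp [h1]) (by simp [h2]), hw2]
      · apply sep_ne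
        · simp; omega
        · simp; omega
        · simpa using hres

/-- Böhm's theorem for closed βη-normal terms. -/
theorem bohm {t t' : Lam} (ct : Closed t) (ct' : Closed t') (ht : IsBetaEtaNormal t)
    (ht' : IsBetaEtaNormal t') (hne : t ≠ t') (a b : Q) :
    ∃ g : Q, g ⋄ mk t ct = a ∧ g ⋄ mk t' ct' = b := by
  obtain ⟨us, h1, h2⟩ := bohm_aux _ _ le_rfl t t' rfl ht ht' hne 0 a b
  obtain ⟨g, hg⟩ := exists_fold us
  refine ⟨g, ?_, ?_⟩
  · rw [hg, ← h1]
    simp only [ev, inst_of_closeAt _ t 0 (closeAt_zero.2 ct)]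
  · rw [hg, ← h2]
    have hclose := closeAt_zero.2 ct'
    simp only [ev, inst_of_closeAt _ _ 0 hclose]

/-! ### Recursive functions in an adequate numeral system -/

structure Adequate (D : ℕ → Q) where
  sc : Q
  pd : Q
  zt : Q
  sc_eq : ∀ n, sc ⋄ D n = D (n + 1)
  pd_eq : ∀ n, pd ⋄ D (n + 1) = D n
  zt_zero : zt ⋄ D 0 = K
  zt_succ : ∀ n, zt ⋄ D (n + 1) = K ⋄ Id

def encQ (l : List Q) : Q := l.foldr (fun a r => Pr ⋄ a ⋄ r) Id

@[simp] theorem encQ_cons (a : Q) (l : List Q) : encQ (a :: l) = Pr ⋄ a ⋄ encQ l := rfl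

def enc (D : ℕ → Q) {n : ℕ} (v : List.Vector ℕ n) : Q := encQ (v.toList.map D)

@[simp] theorem enc_cons (D : ℕ → Q) {n : ℕ} (a : ℕ) (v : List.Vector ℕ n) :
    enc D (a ::ᵥ v) = Pr ⋄ D a ⋄ enc D v := by
  simp [enc]

def RepT (D : ℕ → Q) {n : ℕ} (f : List.Vector ℕ n → ℕ) : Prop :=
  ∃ F : Q, ∀ v, F ⋄ enc D v = D (f v)

def RepP (D : ℕ → Q) {n : ℕ} (f : List.Vector ℕ n →. ℕ) : Prop :=
  ∃ F : Q, ∀ v m, m ∈ f v → F ⋄ enc D v = D m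

theorem exists_tuple {n : ℕ} (G : Fin n → Q) :
    ∃ H : Q, ∀ x, H ⋄ x = encQ (List.ofFn fun i => G i ⋄ x) := by
  induction n with
  | zero => exact ⟨K ⋄ Id, fun x => by simp [encQ]⟩
  | succ n ih =>
    obtain ⟨H, hH⟩ := ih (fun i => G i.succ)
    refine ⟨eval [] (abs (ct Pr ⋆ (ct (G 0) ⋆ vr 0) ⋆ (ct H ⋆ vr 0))), fun x => ?_⟩
    simp [eval, hH, List.ofFn_succ]

theorem rep_get (D : ℕ → Q) {n : ℕ} (i : Fin n) :
    RepT D (fun v : List.Vector ℕ n => v.get i) := by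
  induction n with
  | zero => exact i.elim0
  | succ n ih =>
    refine Fin.cases ?_ (fun i => ?_) i
    · refine ⟨eval [] (abs (vr 0 ⋆ ct K)), fun v => ?_⟩
      obtain ⟨a, w, rfl⟩ := v.exists_eq_cons
      simp [eval]
    · obtain ⟨F, hF⟩ := ih i
      refine ⟨eval [] (abs (ct F ⋆ (vr 0 ⋆ ct (K ⋄ Id)))), fun v => ?_⟩
      obtain ⟨a, w, rfl⟩ := v.exists_eq_cons
      simp [eval, hF]

theorem rep_prim {D : ℕ → Q} (A : Adequate D) {n : ℕ} {f : List.Vector ℕ n → ℕ}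
    (hf : Nat.Primrec' f) : RepT D f := by
  induction hf with
  | zero => exact ⟨K ⋄ D 0, fun v => by simp⟩
  | succ =>
    refine ⟨eval [] (abs (ct A.sc ⋆ (vr 0 ⋆ ct K))), fun v => ?_⟩
    obtain ⟨a, w, rfl⟩ := v.exists_eq_cons
    simp [eval, A.sc_eq]
  | get i => exact rep_get D i
  | comp g _ _ ihf ihg =>
    obtain ⟨F, hF⟩ := ihf
    choose G hG using ihg
    obtain ⟨H, hH⟩ := exists_tuple G
    refine ⟨eval [] (abs (ct F ⋆ (ct H ⋆ vr 0))), fun v => ?_⟩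
    have : H ⋄ enc D v = enc D (List.Vector.ofFn fun i => g i v) := by
      simp only [hH, hG]
      simp [enc, List.map_ofFn, Function.comp_def]
    simp [eval, this, hF]
  | @prec n f g _ _ ihf ihg =>
    obtain ⟨F, hF⟩ := ihf
    obtain ⟨G, hG⟩ := ihg
    let R := fix (eval [] (abs (abs (abs (ct A.zt ⋆ vr 1 ⋆ (ct F ⋆ vr 0) ⋆
      (ct G ⋆ (ct Pr ⋆ (ct A.pd ⋆ vr 1) ⋆ (ct Pr ⋆ (vr 2 ⋆ (ct A.pd ⋆ vr 1) ⋆ vr 0) ⋆ vr 0))))))))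
    have hR : ∀ x t, R ⋄ x ⋄ t = A.zt ⋄ x ⋄ (F ⋄ t) ⋄
        (G ⋄ (Pr ⋄ (A.pd ⋄ x) ⋄ (Pr ⋄ (R ⋄ (A.pd ⋄ x) ⋄ t) ⋄ t))) := by
      intro x t
      have h0 : R = _ := fix_eq _
      conv_lhs => rw [h0]
      simp only [eval_abs]
      rfl
    have key : ∀ (w : List.Vector ℕ n) (m : ℕ), R ⋄ D m ⋄ enc D w =
        D (Nat.rec (f w) (fun y IH => g (y ::ᵥ IH ::ᵥ w)) m) := by
      intro w m
      induction m with
      | zero => rw [hR, A.zt_zero]; simp [hF]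
      | succ m ih =>
        rw [hR, A.zt_succ, A.pd_eq, ih]
        simp only [K_eq, Id_eq, ← enc_cons, hG]
    refine ⟨eval [] (abs (ct R ⋆ (vr 0 ⋆ ct K) ⋆ (vr 0 ⋆ ct (K ⋄ Id)))), fun v => ?_⟩
    obtain ⟨a, w, rfl⟩ := v.exists_eq_cons
    simp [eval, key]

theorem mem_mOfFn {n : ℕ} : ∀ (f : Fin n → Part ℕ) (v : List.Vector ℕ n),
    v ∈ (List.Vector.mOfFn f : Part (List.Vector ℕ n)) → ∀ i, v.get i ∈ f i := by
  induction n with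
  | zero => intro f v _ i; exact i.elim0
  | succ n ih =>
    intro f v hv i
    simp only [List.Vector.mOfFn, Part.bind_eq_bind, Part.mem_bind_iff, Part.pure_eq_some,
      Part.mem_some_iff] at hv
    obtain ⟨a, ha, w, hw, rfl⟩ := hv
    refine Fin.cases ?_ (fun i => ?_) i
    · simpa using ha
    · simpa using ih _ w hw i

theorem rep_partrec {D : ℕ → Q} (A : Adequate D) {n : ℕ} {f : List.Vector ℕ n →. ℕ}
    (hf : Nat.Partrec' f) : RepP D f := by
  induction hf with
  | prim h =>
    obtain ⟨F, hF⟩ := rep_prim A h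
    refine ⟨F, fun v m hm => ?_⟩
    rw [hF]
    simp at hm
    rw [hm]
  | comp g _ _ ihf ihg =>
    obtain ⟨F, hF⟩ := ihf
    choose G hG using ihg
    obtain ⟨H, hH⟩ := exists_tuple G
    refine ⟨eval [] (abs (ct F ⋆ (ct H ⋆ vr 0))), fun v m hm => ?_⟩
    obtain ⟨w, hw, hm⟩ := Part.mem_bind_iff.1 hm
    have hw' := mem_mOfFn _ _ hw
    have : H ⋄ enc D v = enc D w := by
      rw [hH, ← List.Vector.ofFn_get w]
      simp only [enc, List.Vector.toList_ofFn, List.map_ofFn, Function.comp_def]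
      congr 2
      funext i
      exact hG i v _ (hw' i)
    simp [eval, this, hF w m hm]
  | @rfind n f _ ih =>
    obtain ⟨F, hF⟩ := ih
    have hF' : ∀ v, F ⋄ enc D v = D (f v) := fun v => hF v _ (by simp)
    let R := fix (eval [] (abs (abs (abs (ct A.zt ⋆ (ct F ⋆ (ct Pr ⋆ vr 1 ⋆ vr 0)) ⋆ vr 1 ⋆
      (vr 2 ⋆ (ct A.sc ⋆ vr 1) ⋆ vr 0))))))
    have hR : ∀ x t, R ⋄ x ⋄ t = A.zt ⋄ (F ⋄ (Pr ⋄ x ⋄ t)) ⋄ x ⋄ (R ⋄ (A.sc ⋄ x) ⋄ t) := by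
      intro x t
      have h0 : R = _ := fix_eq _
      conv_lhs => rw [h0]
      simp only [eval_abs]
      rfl
    refine ⟨eval [] (abs (ct R ⋆ ct (D 0) ⋆ vr 0)), fun v m hm => ?_⟩
    obtain ⟨h1, h2⟩ := Nat.mem_rfind.1 hm
    simp at h1 h2
    have key : ∀ e, e ≤ m → R ⋄ D (m - e) ⋄ enc D v = D m := by
      intro e
      induction e with
      | zero =>
        intro _
        rw [hR, ← enc_cons, hF', Nat.sub_zero, h1, A.zt_zero]
        simp
      | succ e ihe =>
        intro he
        have h3 : f ((m - (e + 1)) ::ᵥ v) ≠ 0 := h2 (by omega)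
        obtain ⟨c, hc⟩ := Nat.exists_eq_succ_of_ne_zero h3
        rw [hR, ← enc_cons, hF', hc, A.zt_succ, A.sc_eq]
        have h4 : m - (e + 1) + 1 = m - e := by omega
        rw [h4, ihe (by omega)]
        simp
    have := key m le_rfl
    simp at this
    simp [eval, this]

theorem exists_curry (p : ℕ) : ∃ C : Q, ∀ (G : Q) (l : List Q), l.length = p →
    fold (C ⋄ G) l = G ⋄ encQ l := by
  induction p with
  | zero =>
    refine ⟨eval [] (abs (vr 0 ⋆ ct Id)), fun G l hl => ?_⟩
    rw [List.length_eq_zero_iff] at hl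
    subst hl
    simp [eval, encQ]
  | succ p ih =>
    obtain ⟨C, hC⟩ := ih
    let J := eval [] (abs (abs (abs (vr 2 ⋆ (ct Pr ⋆ vr 1 ⋆ vr 0)))))
    have hJ : ∀ g x t, J ⋄ g ⋄ x ⋄ t = g ⋄ (Pr ⋄ x ⋄ t) := by intro g x t; simp [J, eval]
    refine ⟨eval [] (abs (abs (ct C ⋆ (ct J ⋆ vr 1 ⋆ vr 0)))), fun G l hl => ?_⟩
    cases l with
    | nil => simp at hl
    | cons a l => simp [eval, hC _ l (by simpa using hl), hJ]

theorem applyAll_closed (l : List Lam) : ∀ {M : Lam}, Closed M → (∀ t ∈ l, Closed t) →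
    Closed (Lam.applyAll M l) := by
  induction l with
  | nil => intro M h _; exact h
  | cons t l ih =>
    intro M h hl
    exact ih (closed_app h (hl t (by simp))) (fun s hs => hl s (by simp [hs]))

theorem mk_applyAll (d : ℕ → Lam) (hd : ∀ n, Closed (d n)) (l : List ℕ) :
    ∀ (M : Lam) (h : Closed M) (h' : Closed (Lam.applyAll M (l.map d))),
    mk (Lam.applyAll M (l.map d)) h' = fold (mk M h) (l.map fun n => mk (d n) (hd n)) := by
  induction l with
  | nil => intro M h h'; rfl
  | cons n l ih =>
    intro M h h'
    exact ih (Lam.app M (d n)) (closed_app h (hd n)) h'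

theorem kFun_zero (n : ℕ) : kFun n 0 = n + 1 := by simp [kFun]
theorem kFun_one (n : ℕ) : kFun (n + 1) 1 = n := by simp [kFun, Nat.dist]
theorem kFun_self (n : ℕ) : kFun (n + 1) (n + 1) = 0 := by simp [kFun, Nat.dist]

theorem kFun_computable : Computable (fun p : ℕ × ℕ => kFun p.1 p.2) := by
  apply Primrec.to_comp
  have h : Primrec (fun p : ℕ × ℕ => if p.2 = 0 then p.1 + 1 else (p.1 - p.2) + (p.2 - p.1)) := by
    refine Primrec.ite ?_ ?_ ?_
    · exact Primrec.eq.comp Primrec.snd (Primrec.const 0)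
    · exact Primrec.succ.comp Primrec.fst
    · exact Primrec.nat_add.comp (Primrec.nat_sub.comp Primrec.fst Primrec.snd)
        (Primrec.nat_sub.comp Primrec.snd Primrec.fst)
  exact h

theorem exists_adequate (d : ℕ → Lam) (hc : ∀ n, Closed (d n)) (hn : ∀ n, IsBetaEtaNormal (d n))
    (hi : Function.Injective d) (Fk : Lam) (hFk : Closed Fk)
    (h : ∀ n m, BetaEq (Lam.app (Lam.app Fk (d n)) (d m)) (d (kFun n m))) :
    Nonempty (Adequate fun n => mk (d n) (hc n)) := by
  have hk : ∀ n m, mk Fk hFk ⋄ mk (d n) (hc n) ⋄ mk (d m) (hc m)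
      = mk (d (kFun n m)) (hc _) := fun n m =>
    (mk_eq (closed_app (closed_app hFk (hc n)) (hc m)) (hc _)).2 (h n m)
  obtain ⟨g, h1, h0⟩ := bohm (hc 1) (hc 0) (hn 1) (hn 0)
    (fun e => absurd (hi e) (by decide)) K (K ⋄ Id)
  refine ⟨⟨eval [] (abs (ct (mk Fk hFk) ⋆ vr 0 ⋆ ct (mk (d 0) (hc 0)))),
    eval [] (abs (ct (mk Fk hFk) ⋆ vr 0 ⋆ ct (mk (d 1) (hc 1)))),
    eval [] (abs (ct g ⋆ (ct (mk Fk hFk) ⋆ vr 0 ⋆ vr 0))), ?_, ?_, ?_, ?_⟩⟩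
  · intro n; simp [eval, hk, kFun_zero]
  · intro n; simp [eval, hk, kFun_one]
  · simp [eval, hk, kFun_zero, h1]
  · intro n; simp [eval, hk, kFun_self, h0]

end LamQ

/-- The function `k` is total recursive, and for every numeral system `d`, `k` is
λ-definable with respect to `d` iff every total recursive function `ℕ^p → ℕ` is
λ-definable with respect to `d`. -/
theorem statement15 :
    Computable (fun p : ℕ × ℕ => kFun p.1 p.2) ∧
    ∀ d : ℕ → Lam, (∀ n, Lam.Closed (d n)) → (∀ n, Lam.IsBetaEtaNormal (d n)) →
      Function.Injective d →
      ((∃ Fk, Lam.Closed Fk ∧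
          ∀ n m, Lam.BetaEq (Lam.app (Lam.app Fk (d n)) (d m)) (d (kFun n m))) ↔
        (∀ p : ℕ, 1 ≤ p → ∀ φ : (Fin p → ℕ) → ℕ, Computable φ →
          ∃ Fφ, Lam.Closed Fφ ∧ ∀ ns : Fin p → ℕ,
            Lam.BetaEq (Lam.applyAll Fφ (List.ofFn fun i => d (ns i))) (d (φ ns)))) := by
  refine ⟨LamQ.kFun_computable, fun d hc hn hi => ⟨?_, ?_⟩⟩
  · rintro ⟨Fk, hFk, h⟩ p _ φ hφ
    obtain ⟨A⟩ := LamQ.exists_adequate d hc hn hi Fk hFk h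
    have hcomp : Computable (fun v : List.Vector ℕ p => φ v.get) :=
      hφ.comp Primrec.vector_get'.to_comp
    obtain ⟨G, hG⟩ := LamQ.rep_partrec A (Nat.Partrec'.of_part hcomp)
    obtain ⟨C, hC⟩ := LamQ.exists_curry p
    obtain ⟨M, hM, hMC⟩ := LamQ.exists_rep (LamQ.ap C G)
    refine ⟨M, hM, fun ns => ?_⟩
    have hl : (List.ofFn fun i => d (ns i)) = (List.ofFn ns).map d := by
      simp [List.map_ofFn, Function.comp_def]
    rw [hl]
    have hcl : Lam.Closed (Lam.applyAll M ((List.ofFn ns).map d)) := by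
      apply LamQ.applyAll_closed _ hM
      intro t ht
      obtain ⟨n, _, rfl⟩ := List.mem_map.1 ht
      exact hc n
    refine (LamQ.mk_eq hcl (hc _)).1 ?_
    rw [LamQ.mk_applyAll d hc _ M hM, hMC, hC _ _ (by simp)]
    have := hG (List.Vector.ofFn ns) (φ ns) (by
      have e : (List.Vector.ofFn ns).get = ns := by funext i; simp
      simp [e])
    simpa [LamQ.enc] using this
  · intro h
    have hcomp : Computable (fun ns : Fin 2 → ℕ => kFun (ns 0) (ns 1)) :=
      LamQ.kFun_computable.comp
        ((Computable.fin_app.comp Computable.id (Computable.const 0)).pair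
          (Computable.fin_app.comp Computable.id (Computable.const 1)))
    obtain ⟨F, hF, hF'⟩ := h 2 (by norm_num) _ hcomp
    refine ⟨F, hF, fun n m => ?_⟩
    simpa [Lam.applyAll, List.ofFn_succ] using hF' ![n, m]
end
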